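/- arXiv:2301.09942 — 4 statements merged into one kernel-verified Lean document; each statement's English description precedes it below -/
import Mathlib

section
/- Let A₀ = [[0,0],[0,-1]] and A₁ = [[-1,1],[-1,-1]] in M₂(ℝ). Let α : [0,∞) → [0,1] be Lebesgue measurable, and let x : [0,∞) → ℝ² be a continuous function satisfying x(t) = x(0) + ∫₀ᵗ ((1−α(s))·A₀ + α(s)·A₁)·x(s) ds for all t ≥ 0. Then x(t) converges as t → ∞ to a point of the form (c, 0) with c ∈ ℝ, and if this limit (c,0) is nonzero then ∫₀^∞ α(t) dt < ∞. -/
/-! Writing `x = (p, q)`, the system reads `p' = -α p + α q`, `q' = -α p - q` almost everywhere.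
Then `(p² + q²)' = -2 D` with `D = α p² + q² ≥ 0`, so `D` is integrable on `[0,∞)`. As `0 ≤ α ≤ 1`,
both `|(p²)'|` and `|(q²)'|` are at most `3 D`, so `p²` and `q²` converge
(`exists_tendsto_sq`). The limit of `q²` is `0` because `q² ≤ D` is integrable, and `p` itself
converges since it is continuous (`exists_tendsto_of_sq`). If its limit `c` is nonzero, then
eventually `α ≤ (2 / c²) D`, so `α` is integrable.

The derivatives exist only almost everywhere; `sq_eq_add_integral` supplies the integrated chain
rule for squares of absolutely continuous functions. -/

open MeasureTheory Filter Matrix Kronecker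

/-- The Euclidean norm on `n → ℝ`. -/
noncomputable def eNorm {n : Type*} [Fintype n] (v : n → ℝ) : ℝ :=
  Real.sqrt (∑ i, (v i) ^ 2)

/-- The operator norm induced by the Euclidean norm. -/
noncomputable def opNorm {n : Type*} [Fintype n] (M : Matrix n n ℝ) : ℝ :=
  sSup ((fun v => eNorm (M.mulVec v)) '' {v | eNorm v ≤ 1})

/-- `x` is a trajectory of the linear switching system defined by `S`: it is continuous and
satisfies `x t = x 0 + ∫₀ᵗ A s ⬝ x s ds` for all `t ≥ 0`, for some measurable switching law
`A` taking values in `S` on `[0,∞)`. -/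
def IsTrajectory {n : Type*} [Fintype n] (S : Set (Matrix n n ℝ)) (x : ℝ → n → ℝ) : Prop :=
  Continuous x ∧ ∃ A : ℝ → Matrix n n ℝ,
    (∀ i j, Measurable fun s => A s i j) ∧ (∀ s, 0 ≤ s → A s ∈ S) ∧
    (∀ t, 0 ≤ t → IntervalIntegrable (fun s => (A s).mulVec (x s)) volume 0 t) ∧
    (∀ t, 0 ≤ t → x t = x 0 + ∫ s in (0:ℝ)..t, (A s).mulVec (x s))

/-- The topological top Lyapunov exponent
`Λ(S) = lim_{t→∞} sup_x (1/t) log (‖x t‖/‖x 0‖)`, the supremum being over all trajectories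
of the linear switching system defined by `S` with `x 0 ≠ 0`. -/
noncomputable def Lambda {n : Type*} [Fintype n] (S : Set (Matrix n n ℝ)) : ℝ :=
  limUnder atTop fun t : ℝ =>
    sSup {r | ∃ x : ℝ → n → ℝ, IsTrajectory S x ∧ x 0 ≠ 0 ∧
      r = (1 / t) * Real.log (eNorm (x t) / eNorm (x 0))}

/-- `N` is a norm on `n → ℝ`. -/
structure IsNorm {n : Type*} [Fintype n] (N : (n → ℝ) → ℝ) : Prop where
  eq_zero_iff : ∀ v, N v = 0 ↔ v = 0
  smul : ∀ (a : ℝ) (v), N (a • v) = |a| * N v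
  triangle : ∀ v w, N (v + w) ≤ N v + N w

/-- `N` is an extremal norm for `S`: `t ↦ e^{-tΛ(S)} N (x t)` is non-increasing on `[0,∞)`
along every trajectory. -/
def IsExtremalNorm {n : Type*} [Fintype n] (S : Set (Matrix n n ℝ)) (N : (n → ℝ) → ℝ) : Prop :=
  IsNorm N ∧ ∀ x : ℝ → n → ℝ, IsTrajectory S x → ∀ s t : ℝ, 0 ≤ s → s ≤ t →
    Real.exp (-t * Lambda S) * N (x t) ≤ Real.exp (-s * Lambda S) * N (x s)

/-- `N` is a Barabanov norm for `S`. -/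
def IsBarabanovNorm {n : Type*} [Fintype n] (S : Set (Matrix n n ℝ)) (N : (n → ℝ) → ℝ) : Prop :=
  IsExtremalNorm S N ∧ ∀ u : n → ℝ, ∃ x : ℝ → n → ℝ, IsTrajectory S x ∧ x 0 = u ∧
    ∀ t : ℝ, 0 ≤ t → Real.exp (-t * Lambda S) * N (x t) = N u

/-- `S` is irreducible: no nontrivial proper subspace is invariant under every `A ∈ S`. -/
def IrreducibleSystem {n : Type*} [Fintype n] (S : Set (Matrix n n ℝ)) : Prop :=
  ¬ ∃ V : Submodule ℝ (n → ℝ), 0 < Module.finrank ℝ V ∧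
    Module.finrank ℝ V < Fintype.card n ∧ ∀ A ∈ S, ∀ v ∈ V, A.mulVec v ∈ V

/-- A real matrix is Hurwitz if all of its complex eigenvalues have negative real part. -/
def IsHurwitz {n : Type*} [Fintype n] [DecidableEq n] (A : Matrix n n ℝ) : Prop :=
  ∀ μ ∈ spectrum ℂ (A.map (Complex.ofReal ·)), μ.re < 0

/-- Chain rule for the square of an absolutely continuous function, in integrated form. Since `f`
is only integrable, `u` is differentiable merely almost everywhere. -/
lemma sq_eq_add_integral {u f : ℝ → ℝ} (hf : ∀ t, 0 ≤ t → IntervalIntegrable f volume 0 t)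
    (hu : ∀ t, 0 ≤ t → u t = u 0 + ∫ s in (0:ℝ)..t, f s) (t : ℝ) (ht : 0 ≤ t) :
    u t ^ 2 = u 0 ^ 2 + ∫ s in (0:ℝ)..t, 2 * u s * f s := by
  -- On negative times `u` need not be the primitive `F` of `f`, so the argument is run on `F`.
  set F : ℝ → ℝ := fun r => ∫ s in (0:ℝ)..r, f s with hF
  have hac : AbsolutelyContinuousOnInterval F 0 t :=
    (hf t ht).absolutelyContinuousOnInterval_intervalIntegral (by simp)
  have h1 := hac.integral_deriv_mul_eq_sub hac
  have hF0 : F 0 = 0 := by simp [hF]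
  have hd : ∀ᵐ s, s ∈ Set.uIoc 0 t → deriv F s = f s := by
    filter_upwards [(hf t ht).ae_hasDerivAt_integral] with s hs hst
    exact (hs (Set.uIoc_subset_uIcc hst) 0 (by simp)).deriv
  have hFi : IntervalIntegrable (fun s => 2 * F s * f s) volume 0 t :=
    (hf t ht).continuousOn_mul (continuousOn_const.mul hac.continuousOn)
  have h2 : ∫ s in (0:ℝ)..t, 2 * F s * f s = F t ^ 2 := by
    rw [hF0] at h1
    rw [show F t ^ 2 = F t * F t - 0 * 0 by ring, ← h1]
    refine intervalIntegral.integral_congr_ae ?_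
    filter_upwards [hd] with s hs hst
    rw [hs hst]; ring
  have h3 : ∫ s in (0:ℝ)..t, 2 * u s * f s
      = ∫ s in (0:ℝ)..t, (2 * u 0 * f s + 2 * F s * f s) := by
    refine intervalIntegral.integral_congr fun s hs => ?_
    rw [Set.uIcc_of_le ht] at hs
    have := hu s hs.1
    change 2 * u s * f s = _
    rw [this]; simp only [hF]; ring
  rw [h3, intervalIntegral.integral_add ((hf t ht).const_mul _) hFi, h2,
    intervalIntegral.integral_const_mul, hu t ht]
  simp only [hF]; ring

/-- If `u` is a primitive of `f` on `[0,∞)` and `u f` is integrable there, `u ^ 2` has a limit. -/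
lemma exists_tendsto_sq {u f : ℝ → ℝ} (hf : ∀ t, 0 ≤ t → IntervalIntegrable f volume 0 t)
    (hu : ∀ t, 0 ≤ t → u t = u 0 + ∫ s in (0:ℝ)..t, f s)
    (hi : IntegrableOn (fun s => 2 * u s * f s) (Set.Ioi 0)) :
    ∃ L, Tendsto (fun t => u t ^ 2) atTop (nhds L) := by
  refine ⟨_, ((intervalIntegral_tendsto_integral_Ioi 0 hi tendsto_id).const_add
    (u 0 ^ 2)).congr' ?_⟩
  filter_upwards [eventually_ge_atTop 0] with t ht
  exact (sq_eq_add_integral hf hu t ht).symm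

/-- When the limit of `p ^ 2` is nonzero, `p` eventually has no zero, hence constant sign. -/
lemma exists_tendsto_of_sq {p : ℝ → ℝ} (hp : Continuous p) {L : ℝ}
    (h : Tendsto (fun t => p t ^ 2) atTop (nhds L)) : ∃ c, Tendsto p atTop (nhds c) := by
  have habs : Tendsto (fun t => |p t|) atTop (nhds (Real.sqrt L)) := by
    simpa only [Real.sqrt_sq_eq_abs] using h.sqrt
  have hL : 0 ≤ L := ge_of_tendsto' h fun t => sq_nonneg _
  rcases hL.eq_or_lt with rfl | hL
  · exact ⟨0, (tendsto_zero_iff_abs_tendsto_zero p).2 (by simpa [Function.comp_def] using habs)⟩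
  · obtain ⟨T, hT⟩ := eventually_atTop.1 (h.eventually (lt_mem_nhds hL))
    have hne : ∀ t ∈ Set.Ici T, p t ≠ 0 := fun t ht h0 => by
      have := hT t ht
      simp [h0] at this
    by_cases hs : ∃ s ∈ Set.Ici T, 0 ≤ p s
    · obtain ⟨s, hsT, hs⟩ := hs
      refine ⟨_, habs.congr' ?_⟩
      filter_upwards [eventually_ge_atTop T] with t ht
      refine abs_of_nonneg (le_of_not_gt fun hlt => ?_)
      obtain ⟨r, hr, hr0⟩ := isPreconnected_Ici.intermediate_value (a := t) (b := s) ht hsT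
        hp.continuousOn ⟨hlt.le, hs⟩
      exact hne r hr hr0
    · push Not at hs
      refine ⟨_, habs.neg.congr' ?_⟩
      filter_upwards [eventually_ge_atTop T] with t ht
      rw [abs_of_neg (hs t ht), neg_neg]

/-- The scalar form of the system. The integrable function `α p² + q²` is minus half the
derivative of `p² + q²`, and it dominates the derivatives of both `p²` and `q²`. -/
lemma scalar_system {α p q : ℝ → ℝ} (hαm : Measurable α)
    (hα : ∀ t, 0 ≤ t → α t ∈ Set.Icc (0:ℝ) 1) (hp : Continuous p) (hq : Continuous q)
    (hpe : ∀ t, 0 ≤ t → p t = p 0 + ∫ s in (0:ℝ)..t, (-α s * p s + α s * q s))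
    (hqe : ∀ t, 0 ≤ t → q t = q 0 + ∫ s in (0:ℝ)..t, (-α s * p s - q s)) :
    ∃ c : ℝ, Tendsto p atTop (nhds c) ∧ Tendsto q atTop (nhds 0) ∧
      (c ≠ 0 → IntegrableOn α (Set.Ioi 0)) := by
  have hαi : ∀ t, 0 ≤ t → IntervalIntegrable α volume 0 t := fun t ht => by
    rw [intervalIntegrable_iff_integrableOn_Ioc_of_le ht]
    refine Measure.integrableOn_of_bounded (M := 1) (by simp) hαm.aestronglyMeasurable ?_
    refine (ae_restrict_iff' measurableSet_Ioc).2 (ae_of_all _ fun s hs => ?_)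
    have := hα s hs.1.le
    rw [Real.norm_of_nonneg this.1]; exact this.2
  have hmul : ∀ {k : ℝ → ℝ}, Continuous k → ∀ t, 0 ≤ t →
      IntervalIntegrable (fun s => α s * k s) volume 0 t :=
    fun hk t ht => (hαi t ht).mul_continuousOn hk.continuousOn
  have hfi : ∀ t, 0 ≤ t → IntervalIntegrable (fun s => -α s * p s + α s * q s) volume 0 t :=
    fun t ht => by simpa only [neg_mul, Pi.neg_apply] using (hmul hp t ht).neg.add (hmul hq t ht)
  have hgi : ∀ t, 0 ≤ t → IntervalIntegrable (fun s => -α s * p s - q s) volume 0 t :=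
    fun t ht => by simpa only [neg_mul, Pi.neg_apply] using (hmul hp t ht).neg.sub (hq.intervalIntegrable 0 t)
  set D : ℝ → ℝ := fun s => α s * p s ^ 2 + q s ^ 2 with hD
  have hDi : ∀ t, 0 ≤ t → IntervalIntegrable D volume 0 t := fun t ht =>
    (hmul (hp.pow 2) t ht).add ((hq.pow 2).intervalIntegrable 0 t)
  have hD0 : ∀ s, 0 ≤ s → 0 ≤ D s := fun s hs =>
    add_nonneg (mul_nonneg (hα s hs).1 (sq_nonneg _)) (sq_nonneg _)
  have hDint : IntegrableOn D (Set.Ioi 0) := by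
    refine integrableOn_Ioi_of_intervalIntegral_norm_bounded (l := atTop)
      (b := fun t : ℝ => max t 0) ((p 0 ^ 2 + q 0 ^ 2) / 2) 0 (fun t => ?_)
      (tendsto_atTop_mono (fun t => le_max_left t 0) tendsto_id) (Eventually.of_forall fun t => ?_)
    · exact (intervalIntegrable_iff_integrableOn_Ioc_of_le (le_max_right t 0)).1
        (hDi _ (le_max_right t 0))
    · obtain ⟨r, hr⟩ : ∃ r, r = max t 0 := ⟨_, rfl⟩
      have hr0 : 0 ≤ r := hr ▸ le_max_right t 0
      rw [← hr]
      have e1 := sq_eq_add_integral hfi hpe r hr0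
      have e2 := sq_eq_add_integral hgi hqe r hr0
      have e3 : (∫ s in (0:ℝ)..r, 2 * p s * (-α s * p s + α s * q s))
          + (∫ s in (0:ℝ)..r, 2 * q s * (-α s * p s - q s)) = -2 * ∫ s in (0:ℝ)..r, D s := by
        rw [← intervalIntegral.integral_add
          ((hfi r hr0).continuousOn_mul (by fun_prop))
          ((hgi r hr0).continuousOn_mul (by fun_prop)), ← intervalIntegral.integral_const_mul]
        refine intervalIntegral.integral_congr fun s _ => ?_
        simp only [hD]; ring
      have e4 : ∫ s in (0:ℝ)..r, ‖D s‖ = ∫ s in (0:ℝ)..r, D s := by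
        refine intervalIntegral.integral_congr fun s hs => ?_
        rw [Set.uIcc_of_le hr0] at hs
        exact Real.norm_of_nonneg (hD0 s hs.1)
      rw [e4]
      nlinarith [sq_nonneg (p r), sq_nonneg (q r)]
  have hdom : ∀ {k : ℝ → ℝ} (C : ℝ), Measurable k → (∀ s, 0 < s → |k s| ≤ C * D s) →
      IntegrableOn k (Set.Ioi 0) := fun C hk hb =>
    (hDint.const_mul C).mono' hk.aestronglyMeasurable
      ((ae_restrict_iff' measurableSet_Ioi).2 (ae_of_all _ hb))
  have hpm := hp.measurable
  have hqm := hq.measurable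
  obtain ⟨L, hL⟩ := exists_tendsto_sq hfi hpe <| hdom 3 (by fun_prop) fun s hs => by
    obtain ⟨a0, a1⟩ := hα s hs.le
    have h1 := mul_nonneg a0 (sq_nonneg (p s - q s))
    have h2 := mul_nonneg a0 (sq_nonneg (p s + q s))
    have h3 := mul_nonneg (sub_nonneg.2 a1) (sq_nonneg (q s))
    have h4 := mul_nonneg a0 (sq_nonneg (p s))
    simp only [hD]
    rw [abs_le]; constructor <;> nlinarith [sq_nonneg (q s)]
  obtain ⟨M, hM⟩ := exists_tendsto_sq hgi hqe <| hdom 3 (by fun_prop) fun s hs => by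
    obtain ⟨a0, a1⟩ := hα s hs.le
    have h1 := mul_nonneg a0 (sq_nonneg (p s - q s))
    have h2 := mul_nonneg a0 (sq_nonneg (p s + q s))
    have h3 := mul_nonneg (sub_nonneg.2 a1) (sq_nonneg (q s))
    have h4 := mul_nonneg a0 (sq_nonneg (p s))
    simp only [hD]
    rw [abs_le]; constructor <;> nlinarith [sq_nonneg (q s)]
  have hq2 : IntegrableOn (fun s => q s ^ 2) (Set.Ioi 0) := hdom 1 (by fun_prop) fun s hs => by
    have := mul_nonneg (hα s hs.le).1 (sq_nonneg (p s))
    rw [abs_of_nonneg (sq_nonneg _)]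
    simp only [hD]; linarith
  have hM0 : M = 0 := by
    refine IntegrableAtFilter.eq_zero_of_tendsto (μ := volume)
      ⟨Set.Ioi 0, Ioi_mem_atTop 0, hq2⟩ (fun s hs => ?_) hM
    obtain ⟨b, hb⟩ := mem_atTop_sets.1 hs
    exact top_unique <| (Real.volume_Ici (a := b)).symm.le.trans (measure_mono hb)
  obtain ⟨c, hc⟩ := exists_tendsto_of_sq hp hL
  refine ⟨c, hc, ?_, fun hc0 => ?_⟩
  · have := (hM0 ▸ hM).sqrt
    simp only [Real.sqrt_sq_eq_abs, Real.sqrt_zero] at this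
    exact (tendsto_zero_iff_abs_tendsto_zero q).2 this
  · have hc2 : 0 < c ^ 2 := by positivity
    obtain ⟨T, hT⟩ := eventually_atTop.1 ((hc.pow 2).eventually (lt_mem_nhds (half_lt_self hc2)))
    have hR : 0 ≤ max T 0 := le_max_right _ _
    rw [← Set.Ioc_union_Ioi_eq_Ioi hR]
    refine ((intervalIntegrable_iff_integrableOn_Ioc_of_le hR).1 (hαi _ hR)).union ?_
    refine ((hDint.mono_set (Set.Ioi_subset_Ioi hR)).const_mul (2 / c ^ 2)).mono'
      hαm.aestronglyMeasurable ((ae_restrict_iff' measurableSet_Ioi).2 (ae_of_all _ fun s hs => ?_))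
    have hs0 : 0 ≤ s := hR.trans (le_of_lt hs)
    have hsT : c ^ 2 / 2 < p s ^ 2 := hT s ((le_max_left T 0).trans (le_of_lt hs))
    have ha := (hα s hs0).1
    rw [Real.norm_of_nonneg ha, div_mul_eq_mul_div, le_div_iff₀ hc2]
    simp only [hD]
    nlinarith [mul_le_mul_of_nonneg_left hsT.le ha, sq_nonneg (q s)]

theorem stmt_10 (A₀ A₁ : Matrix (Fin 2) (Fin 2) ℝ)
    (hA₀ : A₀ = !![0, 0; 0, -1]) (hA₁ : A₁ = !![-1, 1; -1, -1])
    (α : ℝ → ℝ) (hαm : Measurable α) (hα01 : ∀ t, 0 ≤ t → α t ∈ Set.Icc (0:ℝ) 1)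
    (x : ℝ → Fin 2 → ℝ) (hx : Continuous x)
    (hint : ∀ t, 0 ≤ t →
      IntervalIntegrable (fun s => ((1 - α s) • A₀ + α s • A₁).mulVec (x s)) volume 0 t)
    (heq : ∀ t, 0 ≤ t →
      x t = x 0 + ∫ s in (0:ℝ)..t, ((1 - α s) • A₀ + α s • A₁).mulVec (x s)) :
    ∃ c : ℝ, Tendsto x atTop (nhds ![c, 0]) ∧
      (![c, (0:ℝ)] ≠ 0 → ∫⁻ t in Set.Ioi (0:ℝ), ENNReal.ofReal (α t) < ⊤) := by
  have hcomp : ∀ i t, 0 ≤ t → x t i = x 0 i +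
      ∫ s in (0:ℝ)..t, ((1 - α s) • A₀ + α s • A₁).mulVec (x s) i := fun i t ht => by
    have h := (ContinuousLinearMap.proj (R := ℝ) (φ := fun _ : Fin 2 => ℝ) i
      ).intervalIntegral_comp_comm (hint t ht)
    simp only [ContinuousLinearMap.proj_apply] at h
    rw [h, ← Pi.add_apply, ← heq t ht]
  subst hA₀ hA₁
  obtain ⟨c, hc, hq, hα⟩ := scalar_system hαm hα01 (p := fun t => x t 0) (q := fun t => x t 1)
    (by fun_prop) (by fun_prop)
    (fun t ht => by
      rw [hcomp 0 t ht]
      congr 1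
      refine intervalIntegral.integral_congr fun s _ => ?_
      simp [Matrix.mulVec, dotProduct, Fin.sum_univ_two])
    (fun t ht => by
      rw [hcomp 1 t ht]
      congr 1
      refine intervalIntegral.integral_congr fun s _ => ?_
      simp [Matrix.mulVec, dotProduct, Fin.sum_univ_two]
      ring)
  refine ⟨c, tendsto_pi_nhds.2 fun i => ?_, fun hne => ?_⟩
  · fin_cases i
    · exact hc
    · exact hq
  · refine (hα fun h0 => hne ?_).lintegral_lt_top
    ext i
    fin_cases i <;> simp [h0]
end

section
/- Let M₀ = [[0,-2],[1/2,0]] and M₁ = [[0,-1/2],[2,0]] in M₂(ℝ) and let λ := Λ(conv{M₀, M₁}). Then λ ≥ (log 4)/π; in particular λ > 0. -/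
/-!
Write `M₀`, `M₁` for the two matrices. Following `M₀` for time `π / 2` carries `(0, 1)` to
`(-2, 0)`, and following `M₁` for a further `π / 2` carries `(-2, 0)` to `(0, -4)`. Repeating this
switching gives a trajectory (`spiral`) whose norm is multiplied by `4` in each time interval of
length `π`, so it grows at the exponential rate `log 4 / π`.

`Lambda` is defined by `limUnder`, and its `sSup` is real-valued, so the lower bound also requires
that the limit exists and that the suprema are finite. All matrices in the convex hull satisfy
`‖A v‖ ≤ 2 ‖v‖` for the sup norm, so Grönwall's inequality, applied forwards and backwards in time
(`IsTrajectory.norm_le`, `IsTrajectory.norm_zero_le`), bounds the logarithmic growth over `[0, t]`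
above and below by a linear function of `t`. Since shifts of trajectories are trajectories, the
maximal logarithmic growth is subadditive (`growth_subadditive`), and Fekete's lemma
(`exists_tendsto_div_of_subadditive`) gives the limit, which is then evaluated along `t = kπ`
(`le_Lambda`).
-/


open MeasureTheory Filter Matrix Kronecker

open Set Topology

/-! ### Growth bounds for trajectories -/

/-- Grönwall's inequality in integral form; it needs no differentiability of `y`. -/
lemma gronwall_integral {E : Type*} [NormedAddCommGroup E] {y : ℝ → E} (hy : Continuous y)
    {K T : ℝ} (hK : 0 ≤ K) (hT : 0 ≤ T)
    (h : ∀ t ∈ Icc 0 T, ‖y t - y 0‖ ≤ K * ∫ s in (0:ℝ)..t, ‖y s‖) :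
    ‖y T‖ ≤ ‖y 0‖ * Real.exp (K * T) := by
  set u : ℝ → ℝ := fun t => ‖y 0‖ + K * ∫ s in (0:ℝ)..t, ‖y s‖ with hu
  have hle : ∀ t ∈ Icc 0 T, ‖y t‖ ≤ u t := by
    intro t ht
    have h1 := h t ht
    have h2 := norm_le_norm_add_norm_sub' (y t) (y 0)
    simp only [hu]
    linarith
  have hder : ∀ t, HasDerivAt u (K * ‖y t‖) t := by
    intro t
    have := (hy.norm.integral_hasStrictDerivAt 0 t).hasDerivAt
    exact (this.const_mul K).const_add _
  have hder2 : ∀ t, HasDerivAt (fun t => u t * Real.exp (-K * t))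
      (K * ‖y t‖ * Real.exp (-K * t) + u t * (Real.exp (-K * t) * (-K * 1))) t := by
    intro t
    exact (hder t).mul ((hasDerivAt_id t).const_mul (-K)).exp
  -- `u' = K ‖y‖ ≤ K u`, so `u * exp (-K t)` is nonincreasing.
  have hanti : AntitoneOn (fun t => u t * Real.exp (-K * t)) (Icc 0 T) := by
    apply antitoneOn_of_deriv_nonpos (convex_Icc 0 T)
    · exact fun t _ => (hder2 t).continuousAt.continuousWithinAt
    · exact fun t _ => (hder2 t).differentiableAt.differentiableWithinAt
    · intro t ht
      rw [interior_Icc] at ht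
      rw [(hder2 t).deriv]
      have h1 := hle t (Ioo_subset_Icc_self ht)
      have h2 := mul_nonneg (mul_nonneg hK (Real.exp_pos (-K * t)).le) (sub_nonneg.2 h1)
      linarith
  have h0 := hanti (left_mem_Icc.2 hT) (right_mem_Icc.2 hT) hT
  have hu0 : u 0 = ‖y 0‖ := by simp [hu]
  simp only [hu0, mul_zero, Real.exp_zero, mul_one] at h0
  have h1 : u T = u T * Real.exp (-K * T) * Real.exp (K * T) := by
    rw [mul_assoc, ← Real.exp_add]; simp
  calc ‖y T‖ ≤ u T := hle T (right_mem_Icc.2 hT)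
    _ = u T * Real.exp (-K * T) * Real.exp (K * T) := h1
    _ ≤ _ := by gcongr

section Trajectories

variable {n : Type*} [Fintype n]

lemma IsTrajectory.sub_eq {S : Set (Matrix n n ℝ)} {x : ℝ → n → ℝ} (hx : IsTrajectory S x) :
    ∃ A : ℝ → Matrix n n ℝ, (∀ s, 0 ≤ s → A s ∈ S) ∧ ∀ a b, 0 ≤ a → a ≤ b →
      x b - x a = ∫ s in a..b, (A s).mulVec (x s) := by
  obtain ⟨-, A, -, hS, hi, he⟩ := hx
  refine ⟨A, hS, fun a b ha hab => ?_⟩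
  rw [he b (ha.trans hab), he a ha, add_sub_add_left_eq_sub,
    intervalIntegral.integral_interval_sub_left (hi b (ha.trans hab)) (hi a ha)]

lemma IsTrajectory.norm_sub_le {S : Set (Matrix n n ℝ)} {K : ℝ}
    (hK : ∀ A ∈ S, ∀ v : n → ℝ, ‖A.mulVec v‖ ≤ K * ‖v‖) {x : ℝ → n → ℝ}
    (hx : IsTrajectory S x) {a b : ℝ} (ha : 0 ≤ a) (hab : a ≤ b) :
    ‖x b - x a‖ ≤ K * ∫ s in a..b, ‖x s‖ := by
  obtain ⟨A, hS, he⟩ := hx.sub_eq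
  rw [he a b ha hab, ← intervalIntegral.integral_const_mul]
  refine intervalIntegral.norm_integral_le_of_norm_le hab ?_
    ((continuous_const.mul hx.1.norm).intervalIntegrable _ _)
  exact Eventually.of_forall fun s hs => hK _ (hS s (ha.trans hs.1.le)) _

lemma IsTrajectory.norm_le {S : Set (Matrix n n ℝ)} {K : ℝ} (hK0 : 0 ≤ K)
    (hK : ∀ A ∈ S, ∀ v : n → ℝ, ‖A.mulVec v‖ ≤ K * ‖v‖) {x : ℝ → n → ℝ}
    (hx : IsTrajectory S x) {t : ℝ} (ht : 0 ≤ t) :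
    ‖x t‖ ≤ ‖x 0‖ * Real.exp (K * t) :=
  gronwall_integral hx.1 hK0 ht fun _ hs => hx.norm_sub_le hK le_rfl hs.1

/-- The lower growth bound, obtained by running the trajectory backwards in time. -/
lemma IsTrajectory.norm_zero_le {S : Set (Matrix n n ℝ)} {K : ℝ} (hK0 : 0 ≤ K)
    (hK : ∀ A ∈ S, ∀ v : n → ℝ, ‖A.mulVec v‖ ≤ K * ‖v‖) {x : ℝ → n → ℝ}
    (hx : IsTrajectory S x) {t : ℝ} (ht : 0 ≤ t) :
    ‖x 0‖ ≤ ‖x t‖ * Real.exp (K * t) := by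
  have hc : Continuous fun s => x (t - s) := hx.1.comp (by fun_prop)
  have := gronwall_integral hc hK0 ht fun s hs => by
    rw [intervalIntegral.integral_comp_sub_left (fun r => ‖x r‖), norm_sub_rev]
    simpa using hx.norm_sub_le hK (sub_nonneg.2 hs.2) (sub_le_self t hs.1)
  simpa using this

lemma IsTrajectory.shift {S : Set (Matrix n n ℝ)} {x : ℝ → n → ℝ} (hx : IsTrajectory S x)
    {a : ℝ} (ha : 0 ≤ a) : IsTrajectory S fun t => x (t + a) := by
  obtain ⟨hc, A, hm, hS, hi, he⟩ := hx
  refine ⟨hc.comp (by fun_prop), fun s => A (s + a),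
    fun i j => (hm i j).comp (measurable_id.add_const a), fun s hs => hS _ (by positivity),
    fun t ht => ?_, fun t ht => ?_⟩
  · have h1 : IntervalIntegrable (fun s => (A s).mulVec (x s)) volume a (t + a) :=
      (hi a ha).symm.trans (hi (t + a) (by positivity))
    simpa using h1.comp_add_right a
  · change x (t + a) = x (0 + a) + _
    rw [intervalIntegral.integral_comp_add_right (fun s => (A s).mulVec (x s)) a, zero_add,
      he (t + a) (by positivity), he a ha]
    rw [add_assoc, intervalIntegral.integral_add_adjacent_intervals (hi a ha)]
    exact (hi a ha).symm.trans (hi (t + a) (by positivity))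

/-! ### Maximal logarithmic growth -/

lemma norm_le_eNorm (v : n → ℝ) : ‖v‖ ≤ eNorm v := by
  refine (pi_norm_le_iff_of_nonneg (Real.sqrt_nonneg _)).2 fun i => Real.abs_le_sqrt ?_
  exact Finset.single_le_sum (f := fun i => v i ^ 2) (fun i _ => sq_nonneg _) (Finset.mem_univ i)

/-- The constant is not optimal: `card n + 1` is used in place of `√(card n)` because it is
positive, with nonnegative logarithm, also when `n` is empty. -/
lemma eNorm_le_norm (v : n → ℝ) : eNorm v ≤ (Fintype.card n + 1) * ‖v‖ := by
  refine Real.sqrt_le_iff.2 ⟨by positivity, ?_⟩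
  have h1 : ∑ i, v i ^ 2 ≤ Fintype.card n * ‖v‖ ^ 2 := by
    have : ∀ i ∈ Finset.univ, v i ^ 2 ≤ ‖v‖ ^ 2 := fun i _ =>
      sq_le_sq' (neg_le_of_abs_le (norm_le_pi_norm v i)) (le_of_abs_le (norm_le_pi_norm v i))
    simpa using Finset.sum_le_sum this
  have h2 : (0:ℝ) ≤ Fintype.card n := by positivity
  nlinarith [sq_nonneg ‖v‖, mul_nonneg h2 (sq_nonneg ‖v‖),
    mul_nonneg (mul_nonneg h2 h2) (sq_nonneg ‖v‖)]

/-- The set of logarithmic growths over `[0, t]` of nonzero trajectories. -/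
def growthSet (S : Set (Matrix n n ℝ)) (t : ℝ) : Set ℝ :=
  {r | ∃ x : ℝ → n → ℝ, IsTrajectory S x ∧ x 0 ≠ 0 ∧ r = Real.log (eNorm (x t) / eNorm (x 0))}

lemma abs_le_of_mem_growthSet {S : Set (Matrix n n ℝ)} {K : ℝ} (hK0 : 0 ≤ K)
    (hK : ∀ A ∈ S, ∀ v : n → ℝ, ‖A.mulVec v‖ ≤ K * ‖v‖) {t r : ℝ} (ht : 0 ≤ t)
    (hr : r ∈ growthSet S t) : |r| ≤ K * t + Real.log (Fintype.card n + 1) := by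
  obtain ⟨x, hx, hx0, rfl⟩ := hr
  have h1 := hx.norm_le hK0 hK ht
  have h2 := hx.norm_zero_le hK0 hK ht
  have p0 : 0 < ‖x 0‖ := norm_pos_iff.2 hx0
  have pt : 0 < ‖x t‖ := by
    by_contra! hneg
    have := le_antisymm hneg (norm_nonneg _)
    rw [this, zero_mul] at h2
    linarith
  have e0 : 0 < eNorm (x 0) := p0.trans_le (norm_le_eNorm _)
  have et : 0 < eNorm (x t) := pt.trans_le (norm_le_eNorm _)
  have hc : (0:ℝ) < Fintype.card n + 1 := by positivity
  have key : ∀ a b : n → ℝ, 0 < eNorm a → 0 < eNorm b → ‖a‖ ≤ ‖b‖ * Real.exp (K * t) →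
      Real.log (eNorm a) ≤ Real.log (eNorm b) + (K * t + Real.log (Fintype.card n + 1)) := by
    intro a b pa pb hab
    have : eNorm a ≤ (Fintype.card n + 1) * (eNorm b * Real.exp (K * t)) :=
      (eNorm_le_norm a).trans (by gcongr; exact hab.trans (by gcongr; exact norm_le_eNorm b))
    have := Real.log_le_log pa this
    rw [Real.log_mul hc.ne' (by positivity), Real.log_mul pb.ne' (Real.exp_pos _).ne',
      Real.log_exp] at this
    linarith
  rw [Real.log_div et.ne' e0.ne', abs_le]
  have k1 := key _ _ et e0 h1
  have k2 := key _ _ e0 et h2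
  constructor <;> linarith

lemma growth_subadditive {S : Set (Matrix n n ℝ)} {K : ℝ} (hK0 : 0 ≤ K)
    (hK : ∀ A ∈ S, ∀ v : n → ℝ, ‖A.mulVec v‖ ≤ K * ‖v‖)
    (hne : ∃ x : ℝ → n → ℝ, IsTrajectory S x ∧ x 0 ≠ 0) {s t : ℝ} (hs : 0 ≤ s) (ht : 0 ≤ t) :
    sSup (growthSet S (s + t)) ≤ sSup (growthSet S s) + sSup (growthSet S t) := by
  have bdd : ∀ t, 0 ≤ t → BddAbove (growthSet S t) := fun t ht =>
    ⟨_, fun r hr => (le_abs_self r).trans (abs_le_of_mem_growthSet hK0 hK ht hr)⟩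
  obtain ⟨x₀, hx₀, hx₀'⟩ := hne
  refine csSup_le ⟨_, x₀, hx₀, hx₀', rfl⟩ ?_
  rintro r ⟨x, hx, hx0, rfl⟩
  -- `x` never vanishes, so no logarithm below takes its junk value.
  have nz : ∀ t, 0 ≤ t → x t ≠ 0 := by
    intro t ht h
    have h2 := hx.norm_zero_le hK0 hK ht
    rw [h, norm_zero, zero_mul] at h2
    exact hx0 (norm_le_zero_iff.1 h2)
  have pos : ∀ t, 0 ≤ t → eNorm (x t) ≠ 0 := fun t ht =>
    ((norm_pos_iff.2 (nz t ht)).trans_le (norm_le_eNorm _)).ne'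
  have h1 := le_csSup (bdd s hs) ⟨x, hx, hx0, rfl⟩
  have h2 := le_csSup (bdd t ht) ⟨_, hx.shift hs, by simpa using nz s hs, rfl⟩
  simp only [zero_add] at h2
  rw [Real.log_div (pos _ (add_nonneg ht hs)) (pos _ hs)] at h2
  rw [Real.log_div (pos _ hs) (pos _ le_rfl)] at h1
  rw [Real.log_div (pos _ (by positivity)) (pos _ le_rfl), add_comm s t]
  linarith

end Trajectories

/-! ### Existence of the limit -/

/-- Fekete's lemma for functions of a real variable. -/
lemma exists_tendsto_div_of_subadditive {f : ℝ → ℝ} {C D : ℝ}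
    (hsub : ∀ s t, 0 ≤ s → 0 ≤ t → f (s + t) ≤ f s + f t)
    (hC0 : 0 ≤ C) (hD : 0 ≤ D) (hC : ∀ t, 0 ≤ t → |f t| ≤ C * t + D) :
    ∃ L, Tendsto (fun t => f t / t) atTop (𝓝 L) := by
  have hs : Subadditive fun k : ℕ => f k := by
    intro a b
    simpa using hsub a b (by positivity) (by positivity)
  have hb : BddBelow (range fun k : ℕ => f k / k) := by
    refine ⟨-(C + D), ?_⟩
    rintro _ ⟨k, rfl⟩
    rcases Nat.eq_zero_or_pos k with rfl | hk
    · simp; linarith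
    · have hk' : (1:ℝ) ≤ k := by exact_mod_cast hk
      change -(C + D) ≤ f k / k
      rw [le_div_iff₀ (by linarith)]
      have := (abs_le.1 (hC k (by linarith))).1
      nlinarith
  have hL := hs.tendsto_lim hb
  refine ⟨hs.lim, ?_⟩
  have hfl : Tendsto (fun t : ℝ => ⌊t⌋₊) atTop atTop := tendsto_nat_floor_atTop
  have hq : Tendsto (fun t : ℝ => (⌊t⌋₊ : ℝ) / t) atTop (𝓝 1) := tendsto_nat_floor_div_atTop
  have hinv : ∀ c : ℝ, Tendsto (fun t : ℝ => c / t) atTop (𝓝 0) := fun c =>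
    tendsto_const_nhds.div_atTop tendsto_id
  have up : Tendsto (fun t : ℝ => f ⌊t⌋₊ / ⌊t⌋₊ * (⌊t⌋₊ / t) + (C + D) / t) atTop
      (𝓝 hs.lim) := by
    simpa using ((hL.comp hfl).mul hq).add (hinv (C + D))
  have lo : Tendsto (fun t : ℝ => f ((⌊t⌋₊ + 1 : ℕ) : ℝ) / ((⌊t⌋₊ + 1 : ℕ) : ℝ) *
      (⌊t⌋₊ / t + 1 / t) - (C + D) / t) atTop (𝓝 hs.lim) := by
    simpa using ((((tendsto_add_atTop_iff_nat 1).2 hL).comp hfl).mul (hq.add (hinv 1))).sub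
      (hinv (C + D))
  -- By subadditivity, `f (⌊t⌋ + 1) - (C + D) ≤ f t ≤ f ⌊t⌋ + (C + D)`.
  refine tendsto_of_tendsto_of_tendsto_of_le_of_le' lo up ?_ ?_
  · filter_upwards [eventually_gt_atTop 0] with t ht
    have h1 := Nat.floor_le ht.le
    have h2 := (Nat.lt_floor_add_one t).le
    have h3 := hsub t (⌊t⌋₊ + 1 - t) ht.le (by linarith)
    have h4 := le_of_abs_le (hC (⌊t⌋₊ + 1 - t) (by linarith))
    rw [add_sub_cancel] at h3
    have h5 : (0:ℝ) < ⌊t⌋₊ + 1 := by positivity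
    push_cast
    have : f (⌊t⌋₊ + 1) / (⌊t⌋₊ + 1) * (⌊t⌋₊ / t + 1 / t) - (C + D) / t
        = (f (⌊t⌋₊ + 1) - (C + D)) / t := by
      field_simp
    rw [this]
    gcongr
    nlinarith
  · filter_upwards [eventually_ge_atTop 1] with t ht
    have h1 := Nat.floor_le (zero_le_one.trans ht)
    have h2 := (Nat.lt_floor_add_one t).le
    have h3 := hsub ⌊t⌋₊ (t - ⌊t⌋₊) (by positivity) (by linarith)
    have h4 := le_of_abs_le (hC (t - ⌊t⌋₊) (by linarith))
    rw [add_sub_cancel] at h3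
    have h5 : (0:ℝ) < ⌊t⌋₊ := by exact_mod_cast Nat.floor_pos.2 ht
    have : f ⌊t⌋₊ / ⌊t⌋₊ * (⌊t⌋₊ / t) + (C + D) / t = (f ⌊t⌋₊ + (C + D)) / t := by
      field_simp
    rw [this]
    gcongr
    nlinarith

/-- For a bounded system, a single trajectory growing at rate at least `c` along a sequence of
times tending to infinity bounds the Lyapunov exponent below by `c`. -/
lemma le_Lambda {n : Type*} [Fintype n] {S : Set (Matrix n n ℝ)} {K : ℝ} (hK0 : 0 ≤ K)
    (hK : ∀ A ∈ S, ∀ v : n → ℝ, ‖A.mulVec v‖ ≤ K * ‖v‖)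
    {x : ℝ → n → ℝ} (hx : IsTrajectory S x) (hx0 : x 0 ≠ 0) {τ : ℕ → ℝ}
    (hτ : Tendsto τ atTop atTop) {c : ℝ}
    (hc : ∀ k, c * τ k ≤ Real.log (eNorm (x (τ k)) / eNorm (x 0))) :
    c ≤ Lambda S := by
  have bdd : ∀ t, 0 ≤ t → BddAbove (growthSet S t) := fun t ht =>
    ⟨_, fun r hr => (le_abs_self r).trans (abs_le_of_mem_growthSet hK0 hK ht hr)⟩
  have mem : ∀ t, Real.log (eNorm (x t) / eNorm (x 0)) ∈ growthSet S t := fun t =>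
    ⟨x, hx, hx0, rfl⟩
  obtain ⟨L, hL⟩ := exists_tendsto_div_of_subadditive (f := fun t => sSup (growthSet S t))
    (C := K) (D := Real.log (Fintype.card n + 1))
    (fun s t hs ht => growth_subadditive hK0 hK ⟨x, hx, hx0⟩ hs ht) hK0
    (Real.log_nonneg (by simp)) (fun t ht => by
      rw [abs_le]
      constructor
      · exact (abs_le.1 (abs_le_of_mem_growthSet hK0 hK ht (mem t))).1.trans
          (le_csSup (bdd t ht) (mem t))
      · exact csSup_le ⟨_, mem t⟩ fun r hr =>
          le_of_abs_le (abs_le_of_mem_growthSet hK0 hK ht hr))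
  have hLam : Lambda S = L := by
    refine Tendsto.limUnder_eq (hL.congr' ?_)
    filter_upwards [eventually_gt_atTop 0] with t ht
    rw [div_eq_inv_mul, ← one_div, ← smul_eq_mul,
      ← Real.sSup_smul_of_nonneg (by positivity : 0 ≤ 1 / t)]
    congr 1
    ext r
    simp only [growthSet, Set.mem_smul_set, Set.mem_ofPred_eq, smul_eq_mul]
    constructor
    · rintro ⟨_, ⟨y, hy, hy0, rfl⟩, rfl⟩
      exact ⟨y, hy, hy0, rfl⟩
    · rintro ⟨y, hy, hy0, rfl⟩
      exact ⟨_, ⟨y, hy, hy0, rfl⟩, rfl⟩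
  rw [hLam]
  refine ge_of_tendsto (hL.comp hτ) ?_
  filter_upwards [hτ.eventually_gt_atTop 0] with k hk
  simp only [Function.comp]
  rw [le_div_iff₀ hk]
  exact (hc k).trans (le_csSup (bdd _ hk.le) (mem _))

/-! ### The spiralling trajectory -/

/-- The function equal to `4 ^ k * sin t` for `t ∈ [kπ, (k+1)π]`, `k ∈ ℤ`; the pieces agree at the
endpoints, where `sin` vanishes. -/
noncomputable def growingSin (t : ℝ) : ℝ := (4:ℝ) ^ ⌊t / Real.pi⌋ * Real.sin t

lemma floor_div_pi_eventuallyEq {t : ℝ} (ht : ∀ k : ℤ, t ≠ k * Real.pi) :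
    ∀ᶠ s in 𝓝 t, ⌊s / Real.pi⌋ = ⌊t / Real.pi⌋ := by
  have hc : ContinuousAt (fun s : ℝ => s / Real.pi) t := by fun_prop
  have hlt : (⌊t / Real.pi⌋ : ℝ) < t / Real.pi := by
    refine lt_of_le_of_ne (Int.floor_le _) fun h => ht ⌊t / Real.pi⌋ ?_
    rw [h]; field_simp
  filter_upwards [hc.eventually (lt_mem_nhds hlt), hc.eventually
    (gt_mem_nhds (Int.lt_floor_add_one (t / Real.pi)))] with s h1 h2
  exact Int.floor_eq_iff.2 ⟨h1.le, h2⟩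

lemma growingSin_hasDerivAt {t : ℝ} (ht : ∀ k : ℤ, t ≠ k * Real.pi) :
    HasDerivAt growingSin ((4:ℝ) ^ ⌊t / Real.pi⌋ * Real.cos t) t := by
  refine ((Real.hasDerivAt_sin t).const_mul ((4:ℝ) ^ ⌊t / Real.pi⌋)).congr_of_eventuallyEq ?_
  filter_upwards [floor_div_pi_eventuallyEq ht] with s hs
  rw [growingSin, hs]

lemma growingSin_continuous : Continuous growingSin := by
  rw [continuous_iff_continuousAt]
  intro t
  by_cases ht : ∀ k : ℤ, t ≠ k * Real.pi
  · exact (growingSin_hasDerivAt ht).continuousAt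
  · push Not at ht
    obtain ⟨k, rfl⟩ := ht
    have h0 : growingSin (k * Real.pi) = 0 := by simp [growingSin]
    rw [ContinuousAt, h0]
    -- `4 ^ ⌊s / π⌋ ≤ 4 ^ (s / π)`, and the right-hand side is continuous in `s`.
    refine squeeze_zero_norm (a := fun s => (4:ℝ) ^ (s / Real.pi) * |Real.sin s|) ?_ ?_
    · intro s
      rw [growingSin, norm_mul, Real.norm_eq_abs (Real.sin s), Real.norm_of_nonneg (by positivity),
        ← Real.rpow_intCast]
      gcongr
      · norm_num
      · exact Int.floor_le _
    · have hc : Continuous fun s => (4:ℝ) ^ (s / Real.pi) * |Real.sin s| := by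
        refine Continuous.mul ?_ (by fun_prop)
        exact Continuous.rpow continuous_const (by fun_prop) fun _ => Or.inl (by norm_num)
      have := hc.tendsto (k * Real.pi)
      simpa using this

/-- The trajectory from `(0, 1)` switching between the two matrices every quarter turn. On
`[0, π / 2]` it is `(-2 sin t, cos t)`, on `[π / 2, π]` it is `(-2 sin t, 4 cos t)`, and
`spiral (t + π) = -4 • spiral t`. -/
noncomputable def spiral (t : ℝ) : Fin 2 → ℝ :=
  ![-2 * growingSin t, growingSin (t + Real.pi / 2)]

open Classical in
/-- The switching law of `spiral`: the first matrix when `t` lies in `[kπ, kπ + π / 2)` for some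
integer `k`, the second one otherwise. -/
noncomputable def spiralLaw (t : ℝ) : Matrix (Fin 2) (Fin 2) ℝ :=
  if ⌊(t + Real.pi / 2) / Real.pi⌋ = ⌊t / Real.pi⌋ then !![0, -2; 1/2, 0] else !![0, -1/2; 2, 0]

lemma floor_half_turn (t : ℝ) : ⌊(t + Real.pi / 2) / Real.pi⌋ = ⌊t / Real.pi⌋ ∨
    ⌊(t + Real.pi / 2) / Real.pi⌋ = ⌊t / Real.pi⌋ + 1 := by
  have h : (t + Real.pi / 2) / Real.pi = t / Real.pi + 1 / 2 := by
    field_simp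
  rw [h]
  have h1 : ⌊t / Real.pi⌋ ≤ ⌊t / Real.pi + 1 / 2⌋ := Int.floor_mono (by linarith)
  have h2 : ⌊t / Real.pi + 1 / 2⌋ ≤ ⌊t / Real.pi + 1⌋ := Int.floor_mono (by linarith)
  rw [Int.floor_add_one] at h2
  omega

lemma spiral_continuous : Continuous spiral := by
  refine continuous_pi fun i => ?_
  have := growingSin_continuous
  fin_cases i <;> simp [spiral] <;> fun_prop

lemma spiral_hasDerivAt {t : ℝ} (ht : ∀ k : ℤ, t ≠ k * Real.pi)
    (ht' : ∀ k : ℤ, t + Real.pi / 2 ≠ k * Real.pi) :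
    HasDerivAt spiral ((spiralLaw t).mulVec (spiral t)) t := by
  have h1 := (growingSin_hasDerivAt ht).const_mul (-2)
  have h2 := (growingSin_hasDerivAt ht').comp_add_const t (Real.pi / 2)
  refine hasDerivAt_pi.2 fun i => ?_
  rcases floor_half_turn t with h | h
  · fin_cases i
    · refine h1.congr_deriv ?_
      simp [spiralLaw, spiral, growingSin, h, Real.sin_add_pi_div_two]
      ring
    · refine h2.congr_deriv ?_
      simp [spiralLaw, spiral, growingSin, h, Real.cos_add_pi_div_two]
      ring
  · have h4 : (4:ℝ) ^ (⌊t / Real.pi⌋ + 1) = 4 ^ ⌊t / Real.pi⌋ * 4 := zpow_add_one₀ (by norm_num) _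
    fin_cases i
    · refine h1.congr_deriv ?_
      simp [spiralLaw, spiral, growingSin, h, Real.sin_add_pi_div_two, h4]
      ring
    · refine h2.congr_deriv ?_
      simp [spiralLaw, spiral, growingSin, h, Real.cos_add_pi_div_two, h4]
      ring

lemma spiralLaw_measurable (i j : Fin 2) : Measurable fun s => spiralLaw s i j := by
  have hm : MeasurableSet {t : ℝ | ⌊(t + Real.pi / 2) / Real.pi⌋ = ⌊t / Real.pi⌋} :=
    measurableSet_eq_fun (by fun_prop) (by fun_prop)
  have : (fun s => spiralLaw s i j) = fun s =>
      if s ∈ {t : ℝ | ⌊(t + Real.pi / 2) / Real.pi⌋ = ⌊t / Real.pi⌋} then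
        (!![0, -2; 1/2, 0] : Matrix (Fin 2) (Fin 2) ℝ) i j else
        (!![0, -1/2; 2, 0] : Matrix (Fin 2) (Fin 2) ℝ) i j := by
    funext s
    simp only [spiralLaw, Set.mem_ofPred_eq]
    split_ifs <;> rfl
  rw [this]
  exact Measurable.ite hm measurable_const measurable_const

lemma spiralLaw_mem (s : ℝ) : spiralLaw s ∈ convexHull ℝ
    ({!![0, -2; 1/2, 0], !![0, -1/2; 2, 0]} : Set (Matrix (Fin 2) (Fin 2) ℝ)) := by
  apply subset_convexHull
  unfold spiralLaw
  split_ifs <;> simp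

lemma norm_mulVec_le_of_mem_hull (A : Matrix (Fin 2) (Fin 2) ℝ) (hA : A ∈ convexHull ℝ
    ({!![0, -2; 1/2, 0], !![0, -1/2; 2, 0]} : Set (Matrix (Fin 2) (Fin 2) ℝ)))
    (v : Fin 2 → ℝ) : ‖A.mulVec v‖ ≤ 2 * ‖v‖ := by
  have hconv : Convex ℝ {A : Matrix (Fin 2) (Fin 2) ℝ | ‖A.mulVec v‖ ≤ 2 * ‖v‖} := by
    intro A hA B hB a b ha hb hab
    simp only [Set.mem_ofPred_eq] at *
    rw [Matrix.add_mulVec, Matrix.smul_mulVec, Matrix.smul_mulVec]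
    refine (norm_add_le _ _).trans ?_
    rw [norm_smul, norm_smul, Real.norm_of_nonneg ha, Real.norm_of_nonneg hb]
    calc a * ‖A.mulVec v‖ + b * ‖B.mulVec v‖ ≤ a * (2 * ‖v‖) + b * (2 * ‖v‖) := by gcongr
      _ = 2 * ‖v‖ := by rw [← add_mul, hab, one_mul]
  refine convexHull_min ?_ hconv hA
  have h0 := norm_le_pi_norm v 0
  have h1 := norm_le_pi_norm v 1
  rw [Real.norm_eq_abs] at h0 h1
  rintro B (rfl | rfl) <;>
  · refine (pi_norm_le_iff_of_nonneg (by positivity)).2 fun i => ?_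
    fin_cases i <;> simp [Matrix.mulVec, dotProduct, Fin.sum_univ_two] <;>
      linarith [norm_nonneg v]

lemma spiral_isTrajectory : IsTrajectory (convexHull ℝ
    ({!![0, -2; 1/2, 0], !![0, -1/2; 2, 0]} : Set (Matrix (Fin 2) (Fin 2) ℝ))) spiral := by
  have hint : ∀ t, IntervalIntegrable (fun s => (spiralLaw s).mulVec (spiral s)) volume 0 t := by
    intro t
    refine ((continuous_const.mul spiral_continuous.norm).intervalIntegrable
      (u := fun s => 2 * ‖spiral s‖) 0 t).mono_fun ?_ ?_
    · refine Measurable.aestronglyMeasurable (measurable_pi_iff.2 fun i => ?_)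
      simp only [Matrix.mulVec, dotProduct]
      exact Finset.measurable_sum _ fun j _ => (spiralLaw_measurable i j).mul
        ((continuous_apply j).comp spiral_continuous).measurable
    · refine Eventually.of_forall fun s => ?_
      simpa using norm_mulVec_le_of_mem_hull _ (spiralLaw_mem s) (spiral s)
  refine ⟨spiral_continuous, spiralLaw, spiralLaw_measurable, fun s _ => spiralLaw_mem s,
    fun t _ => hint t, fun t ht => ?_⟩
  have hcount : ((range fun k : ℤ => (k:ℝ) * Real.pi) ∪
      range fun k : ℤ => (k:ℝ) * Real.pi - Real.pi / 2).Countable :=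
    (countable_range _).union (countable_range _)
  have := MeasureTheory.integral_eq_of_hasDerivAt_off_countable
    spiral (fun s => (spiralLaw s).mulVec (spiral s)) (a := 0) (b := t) hcount
    spiral_continuous.continuousOn (fun s hs => ?_) (hint t)
  · rw [this, add_sub_cancel]
  · refine spiral_hasDerivAt (fun k hk => hs.2 (Or.inl ⟨k, hk.symm⟩))
      (fun k hk => hs.2 (Or.inr ⟨k, ?_⟩))
    simp only
    linarith

lemma spiral_eNorm (k : ℕ) : eNorm (spiral (k * Real.pi)) = 4 ^ k := by
  have hfl : ⌊((k:ℝ) * Real.pi + Real.pi / 2) / Real.pi⌋ = k := by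
    have h : ((k:ℝ) * Real.pi + Real.pi / 2) / Real.pi = k + 1 / 2 := by
      field_simp
    rw [h, Int.floor_eq_iff]
    constructor <;> push_cast <;> linarith
  have hcos : Real.cos (k * Real.pi) ^ 2 = 1 := by
    rw [Real.cos_sq', Real.sin_nat_mul_pi]; norm_num
  rw [eNorm, Fin.sum_univ_two]
  simp only [spiral, growingSin, Matrix.cons_val_zero, Matrix.cons_val_one, hfl,
    Real.sin_nat_mul_pi, Real.sin_add_pi_div_two, mul_pow, hcos, zpow_natCast]
  simp

theorem stmt_11 :
    Real.log 4 / Real.pi ≤ Lambda (convexHull ℝ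
        ({!![0, -2; 1/2, 0], !![0, -1/2; 2, 0]} : Set (Matrix (Fin 2) (Fin 2) ℝ))) ∧
      0 < Lambda (convexHull ℝ
        ({!![0, -2; 1/2, 0], !![0, -1/2; 2, 0]} : Set (Matrix (Fin 2) (Fin 2) ℝ))) := by
  have e0 : eNorm (spiral 0) = 1 := by simpa using spiral_eNorm 0
  have h0 : spiral 0 ≠ 0 := by
    intro h
    rw [h] at e0
    simp [eNorm] at e0
  have main := le_Lambda (by norm_num : (0:ℝ) ≤ 2) norm_mulVec_le_of_mem_hull spiral_isTrajectory
    h0 (τ := fun k => k * Real.pi) (c := Real.log 4 / Real.pi)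
    (tendsto_natCast_atTop_atTop.atTop_mul_const Real.pi_pos) (fun k => by
      rw [spiral_eNorm, e0, div_one, Real.log_pow]
      apply le_of_eq
      field_simp)
  exact ⟨main, lt_of_lt_of_le (div_pos (Real.log_pos (by norm_num)) Real.pi_pos) main⟩
end

section
/- Let λ := Λ(conv{[[0,-2],[1/2,0]], [[0,-1/2],[2,0]]}) and define B₀ = [[-λ,-2],[1/2,-λ]] and B₁ = [[-λ,-1/2],[2,-λ]] in M₂(ℝ). Then for every w ∈ ℝ² there exist a Lebesgue measurable function β : [0,∞) → [0,1] and a continuous function y : [0,∞) → ℝ² with y(0) = w, satisfying y(t) = y(0) + ∫₀ᵗ ((1−β(s))·B₀ + β(s)·B₁)·y(s) ds for all t ≥ 0, such that y is periodic: there exists T > 0 with y(t+T) = y(t) for all t ≥ 0. -/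
/-!
The matrices of the convex hull are `[[0, e - 5/4], [5/4 + e, 0]]` with `|e| ≤ 3/4`. In polar
coordinates such a field turns at angular speed `5/4 + e cos 2θ ≥ 1/2`, while the logarithm of the
radius grows at rate `e sin 2θ`. Every trajectory therefore turns in the same direction, and the
growth may be measured per unit angle. After subtracting a constant `lam` from the growth rate, the
best growth at the angle `θ` is the maximum over `e` of `(e sin 2θ - lam) / (5/4 + e cos 2θ)`,
attained at `e = ± 3/4` (`growth_le_bestGrowth`). By continuity in `lam` there is `lam ≥ 0` for
which the best growth has integral zero over a half turn (`exists_balanced`), so that its primitive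
`H` is `π`-periodic, hence bounded.

For this `lam`, the function `‖x‖² exp (-2 H (θ) - 2 lam t)` is nonincreasing along every trajectory
(`solution_sq_le`), whence `‖x t‖ ≤ exp (C + lam t) ‖x 0‖` (`exists_eNorm_trajectory_le`).
Conversely, the feedback which always applies the best `e` yields a trajectory of radius
`r exp (H (θ t) - H (θ 0) + lam t)` (`exists_feedback_trajectory`). Its angle is obtained as the
inverse function of the time needed to reach an angle (`exists_angle`), so no theory of
discontinuous differential equations is needed. Both bounds together show that `lam` is the
Lyapunov exponent (`Lambda_switchSet`). Multiplying the feedback trajectory by `exp (-lam t)`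
removes the factor `exp (lam t)`; what remains depends only on the angle modulo `2π`, which
advances by `2π` in a fixed time, so it is the required periodic solution.
-/

open MeasureTheory Filter Matrix Kronecker

/-! ### Absolutely continuous functions -/

/-- An absolutely continuous function whose derivative is a.e. nonpositive does not increase
between the endpoints of the interval. -/
theorem ac_le_of_ae_deriv_nonpos {f : ℝ → ℝ} {T : ℝ} (hT : 0 ≤ T)
    (hf : AbsolutelyContinuousOnInterval f 0 T)
    (h : ∀ᵐ t, t ∈ Set.uIcc 0 T → ∃ f', HasDerivAt f f' t ∧ f' ≤ 0) : f T ≤ f 0 := by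
  have h1 := hf.integral_deriv_eq_sub
  have h2 : 0 ≤ ∫ t in (0 : ℝ)..T, -deriv f t := by
    apply intervalIntegral.integral_nonneg_of_ae_restrict hT
    rw [Filter.EventuallyLE, ae_restrict_iff' measurableSet_Icc]
    filter_upwards [h] with t ht hmem
    obtain ⟨f', hf', hle⟩ := ht (by rwa [Set.uIcc_of_le hT])
    simp only [Pi.zero_apply]
    rw [hf'.deriv]
    linarith
  rw [intervalIntegral.integral_neg] at h2
  linarith

theorem ac_comp_lipschitz {f g : ℝ → ℝ} {a b : ℝ} {K : NNReal} (hg : LipschitzWith K g)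
    (hf : AbsolutelyContinuousOnInterval f a b) :
    AbsolutelyContinuousOnInterval (fun t => g (f t)) a b := by
  rw [absolutelyContinuousOnInterval_iff] at hf ⊢
  intro ε hε
  obtain ⟨δ, hδ, h⟩ := hf (ε / (K + 1)) (by positivity)
  refine ⟨δ, hδ, fun E hE hlt => ?_⟩
  have h1 := h E hE hlt
  have hK : (0 : ℝ) ≤ K := K.2
  calc ∑ i ∈ Finset.range E.1, dist (g (f (E.2 i).1)) (g (f (E.2 i).2))
      ≤ ∑ i ∈ Finset.range E.1, (K : ℝ) * dist (f (E.2 i).1) (f (E.2 i).2) :=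
        Finset.sum_le_sum fun i _ => hg.dist_le_mul _ _
    _ = K * ∑ i ∈ Finset.range E.1, dist (f (E.2 i).1) (f (E.2 i).2) := by
        rw [Finset.mul_sum]
    _ ≤ K * (ε / (K + 1)) := by gcongr
    _ < ε := by
        rw [mul_div_assoc', div_lt_iff₀ (by positivity)]
        nlinarith

/-! ### The pointwise optimal growth per unit angle -/

/-- Angular speed, at the polar angle `θ`, of the field `[[0, e - 5/4], [5/4 + e, 0]]`.
The matrices of the convex hull are exactly those with `|e| ≤ 3/4`. -/
noncomputable def angSpeed (e θ : ℝ) : ℝ := 5 / 4 + e * Real.cos (2 * θ)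

/-- Growth rate of the logarithm of the radius, corrected by `lam` and measured per unit angle,
for the field with parameter `e`. -/
noncomputable def angGrowth (lam e θ : ℝ) : ℝ := (e * Real.sin (2 * θ) - lam) / angSpeed e θ

/-- The best growth per unit angle; since `angGrowth` is a quotient of two affine functions of
`e`, the maximum over `|e| ≤ 3/4` is attained at an endpoint. -/
noncomputable def bestGrowth (lam θ : ℝ) : ℝ :=
  max (angGrowth lam (3 / 4) θ) (angGrowth lam (-3 / 4) θ)

/-- The primitive of the best growth. -/
noncomputable def bestGrowthInt (lam θ : ℝ) : ℝ := ∫ s in (0 : ℝ)..θ, bestGrowth lam s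

theorem angSpeed_ge {e : ℝ} (he : |e| ≤ 3 / 4) (θ : ℝ) : 1 / 2 ≤ angSpeed e θ := by
  have h1 := Real.abs_cos_le_one (2 * θ)
  have h2 : |e * Real.cos (2 * θ)| ≤ 3 / 4 := by
    rw [abs_mul]; nlinarith [abs_nonneg e, abs_nonneg (Real.cos (2 * θ))]
  unfold angSpeed
  linarith [(abs_le.1 h2).1]

theorem angSpeed_le {e : ℝ} (he : |e| ≤ 3 / 4) (θ : ℝ) : angSpeed e θ ≤ 2 := by
  have h1 := Real.abs_cos_le_one (2 * θ)
  have h2 : |e * Real.cos (2 * θ)| ≤ 3 / 4 := by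
    rw [abs_mul]; nlinarith [abs_nonneg e, abs_nonneg (Real.cos (2 * θ))]
  unfold angSpeed
  linarith [(abs_le.1 h2).2]

theorem abs_three_quarters : |(3 / 4 : ℝ)| ≤ 3 / 4 := by norm_num [abs_of_pos]

theorem abs_neg_three_quarters : |(-3 / 4 : ℝ)| ≤ 3 / 4 := by
  rw [abs_of_neg] <;> norm_num

theorem angSpeed_pos {e : ℝ} (he : |e| ≤ 3 / 4) (θ : ℝ) : 0 < angSpeed e θ := by
  linarith [angSpeed_ge he θ]

theorem continuous_angGrowth {e : ℝ} (he : |e| ≤ 3 / 4) :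
    Continuous fun p : ℝ × ℝ => angGrowth p.1 e p.2 := by
  unfold angGrowth
  refine Continuous.div (by fun_prop) (by unfold angSpeed; fun_prop) fun p => ?_
  exact (angSpeed_pos he _).ne'

theorem continuous_bestGrowth_uncurry : Continuous fun p : ℝ × ℝ => bestGrowth p.1 p.2 :=
  (continuous_angGrowth abs_three_quarters).max (continuous_angGrowth abs_neg_three_quarters)

theorem continuous_bestGrowth (lam : ℝ) : Continuous (bestGrowth lam) :=
  continuous_bestGrowth_uncurry.comp (f := fun θ : ℝ => (lam, θ)) (by fun_prop)

theorem angGrowth_add_pi (lam e θ : ℝ) :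
    angGrowth lam e (θ + Real.pi) = angGrowth lam e θ := by
  have h : 2 * (θ + Real.pi) = 2 * θ + 2 * Real.pi := by ring
  simp only [angGrowth, angSpeed, h, Real.sin_add_two_pi, Real.cos_add_two_pi]

theorem bestGrowth_periodic (lam : ℝ) : Function.Periodic (bestGrowth lam) Real.pi := by
  intro θ
  simp only [bestGrowth, angGrowth_add_pi]

/-- No admissible field grows faster than `bestGrowth`: both sides are affine in `e`, and the
inequality holds at `e = ± 3/4`. -/
theorem growth_le_bestGrowth (lam θ : ℝ) {e : ℝ} (he : |e| ≤ 3 / 4) :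
    e * Real.sin (2 * θ) - lam ≤ bestGrowth lam θ * angSpeed e θ := by
  have h1 : (3 / 4) * Real.sin (2 * θ) - lam ≤ bestGrowth lam θ * angSpeed (3 / 4) θ := by
    rw [← div_le_iff₀ (angSpeed_pos abs_three_quarters θ)]
    exact le_max_left _ _
  have h2 : (-3 / 4) * Real.sin (2 * θ) - lam ≤ bestGrowth lam θ * angSpeed (-3 / 4) θ := by
    rw [← div_le_iff₀ (angSpeed_pos abs_neg_three_quarters θ)]
    exact le_max_right _ _
  obtain ⟨ha, hb⟩ := abs_le.1 he
  unfold angSpeed at *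
  have h3 := mul_le_mul_of_nonneg_left h1 (by linarith : 0 ≤ (3 / 4 + e) * (2 / 3))
  have h4 := mul_le_mul_of_nonneg_left h2 (by linarith : 0 ≤ (3 / 4 - e) * (2 / 3))
  nlinarith

/-- There is an exponent for which the best growth over a half turn is zero. -/
theorem exists_balanced : ∃ lam : ℝ, 0 ≤ lam ∧ ∫ θ in (0 : ℝ)..Real.pi, bestGrowth lam θ = 0 := by
  have hc : Continuous fun lam => ∫ θ in (0 : ℝ)..Real.pi, bestGrowth lam θ :=
    intervalIntegral.continuous_parametric_intervalIntegral_of_continuous'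
      continuous_bestGrowth_uncurry _ _
  have h0 : 0 ≤ ∫ θ in (0 : ℝ)..Real.pi, bestGrowth 0 θ := by
    apply intervalIntegral.integral_nonneg Real.pi_pos.le
    intro θ _
    have := angSpeed_pos abs_three_quarters θ
    have := angSpeed_pos abs_neg_three_quarters θ
    rcases le_total 0 (Real.sin (2 * θ)) with h | h
    · refine le_trans ?_ (le_max_left _ _)
      unfold angGrowth
      apply div_nonneg <;> linarith
    · refine le_trans ?_ (le_max_right _ _)
      unfold angGrowth
      apply div_nonneg <;> linarith
  have h1 : ∫ θ in (0 : ℝ)..Real.pi, bestGrowth 1 θ ≤ 0 := by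
    have : 0 ≤ ∫ θ in (0 : ℝ)..Real.pi, -bestGrowth 1 θ := by
      apply intervalIntegral.integral_nonneg Real.pi_pos.le
      intro θ _
      have := angSpeed_pos abs_three_quarters θ
      have := angSpeed_pos abs_neg_three_quarters θ
      have := Real.neg_one_le_sin (2 * θ)
      have := Real.sin_le_one (2 * θ)
      rw [neg_nonneg]
      apply max_le
      · apply div_nonpos_of_nonpos_of_nonneg <;> linarith
      · apply div_nonpos_of_nonpos_of_nonneg <;> linarith
    rw [intervalIntegral.integral_neg] at this
    linarith
  obtain ⟨lam, hl, h⟩ := intermediate_value_Icc' (zero_le_one' ℝ) hc.continuousOn ⟨h1, h0⟩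
  exact ⟨lam, hl.1, h⟩

theorem hasDerivAt_bestGrowthInt (lam θ : ℝ) :
    HasDerivAt (bestGrowthInt lam) (bestGrowth lam θ) θ :=
  (continuous_bestGrowth lam).integral_hasStrictDerivAt 0 θ |>.hasDerivAt

theorem bestGrowthInt_periodic {lam : ℝ}
    (hlam : ∫ θ in (0 : ℝ)..Real.pi, bestGrowth lam θ = 0) :
    Function.Periodic (bestGrowthInt lam) Real.pi := by
  intro θ
  have h := (bestGrowth_periodic lam).intervalIntegral_add_eq θ 0
  rw [zero_add, hlam] at h
  have hi : ∀ a b, IntervalIntegrable (bestGrowth lam) volume a b :=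
    fun a b => (continuous_bestGrowth lam).intervalIntegrable a b
  unfold bestGrowthInt
  rw [← intervalIntegral.integral_add_adjacent_intervals (hi 0 θ) (hi θ _), h, add_zero]

theorem exists_abs_le_of_periodic {f : ℝ → ℝ} (hf : Function.Periodic f Real.pi)
    (hc : Continuous f) : ∃ C, 0 ≤ C ∧ ∀ θ, |f θ| ≤ C := by
  obtain ⟨C, hC⟩ := (hf.isBounded_of_continuous Real.pi_ne_zero hc).exists_norm_le
  have h : ∀ θ, |f θ| ≤ C := fun θ => hC _ ⟨θ, rfl⟩
  exact ⟨C, (abs_nonneg _).trans (h 0), h⟩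

/-! ### The upper bound for the growth of trajectories -/

theorem exists_polar (a b : ℝ) : ∃ r θ : ℝ, a = r * Real.cos θ ∧ b = r * Real.sin θ :=
  ⟨‖(⟨a, b⟩ : ℂ)‖, Complex.arg ⟨a, b⟩, (Complex.norm_mul_cos_arg ⟨a, b⟩).symm,
    (Complex.norm_mul_sin_arg ⟨a, b⟩).symm⟩

theorem intervalIntegrable_of_measurable_of_abs_le {f : ℝ → ℝ} {C : ℝ} (hf : Measurable f)
    (h : ∀ s, |f s| ≤ C) (a b : ℝ) : IntervalIntegrable f volume a b :=
  (intervalIntegrable_const (c := C)).mono_fun' hf.aestronglyMeasurable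
    (Filter.Eventually.of_forall fun s => h s)

/-- `exp (-2 H)`, with `H` the primitive of the best growth, is the angular factor of the
Lyapunov function `‖x‖² exp (-2 H (θ))`. -/
noncomputable def lyapFactor (lam θ : ℝ) : ℝ := Real.exp (-2 * bestGrowthInt lam θ)

theorem hasDerivAt_lyapFactor (lam θ : ℝ) :
    HasDerivAt (lyapFactor lam) (lyapFactor lam θ * (-2 * bestGrowth lam θ)) θ :=
  ((hasDerivAt_bestGrowthInt lam θ).const_mul (-2)).exp

theorem exists_lyapFactor_lipschitz {lam : ℝ}
    (hlam : ∫ θ in (0 : ℝ)..Real.pi, bestGrowth lam θ = 0) :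
    ∃ K : NNReal, LipschitzWith K (lyapFactor lam) := by
  obtain ⟨C, hC0, hC⟩ := exists_abs_le_of_periodic (bestGrowthInt_periodic hlam)
    (continuous_iff_continuousAt.2 fun θ => (hasDerivAt_bestGrowthInt lam θ).continuousAt)
  obtain ⟨B, hB0, hB⟩ := exists_abs_le_of_periodic (bestGrowth_periodic lam)
    (continuous_bestGrowth lam)
  refine ⟨Real.toNNReal (Real.exp (2 * C) * (2 * B)), ?_⟩
  refine lipschitzWith_of_nnnorm_deriv_le
    (fun θ => (hasDerivAt_lyapFactor lam θ).differentiableAt) fun θ => ?_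
  rw [← NNReal.coe_le_coe, coe_nnnorm, (hasDerivAt_lyapFactor lam θ).deriv,
    Real.coe_toNNReal _ (by positivity), Real.norm_eq_abs, abs_mul, abs_mul]
  have h1 : |lyapFactor lam θ| ≤ Real.exp (2 * C) := by
    rw [lyapFactor, abs_of_pos (Real.exp_pos _)]
    apply Real.exp_le_exp.2
    linarith [(abs_le.1 (hC θ)).1]
  have h2 : |(-2 : ℝ)| * |bestGrowth lam θ| ≤ 2 * B := by
    rw [show |(-2 : ℝ)| = 2 by norm_num]
    linarith [hB θ]
  gcongr

/-- Growth bound along a solution of `p' = (e - 5/4) q`, `q' = (5/4 + e) p`. A polar angle `θ` is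
defined as the integral of the angular speed; then `q cos θ - p sin θ` vanishes identically, and
`(p² + q²) exp (-2 H (θ) - 2 lam t)` is nonincreasing. The quotients in the angular speed take
the value `0` when `p = q = 0`, and all identities used remain true there. -/
theorem solution_sq_le {lam : ℝ} (hlam : ∫ θ in (0 : ℝ)..Real.pi, bestGrowth lam θ = 0)
    {p q e : ℝ → ℝ} (hp : Continuous p) (hq : Continuous q) (he : Measurable e)
    (hbd : ∀ s, |e s| ≤ 3 / 4)
    (hpi : ∀ t, 0 ≤ t → p t = p 0 + ∫ s in (0 : ℝ)..t, (e s - 5 / 4) * q s)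
    (hqi : ∀ t, 0 ≤ t → q t = q 0 + ∫ s in (0 : ℝ)..t, (5 / 4 + e s) * p s) :
    ∃ (θ₀ : ℝ) (θ : ℝ → ℝ), ∀ T, 0 ≤ T →
      (p T ^ 2 + q T ^ 2) * lyapFactor lam (θ T) * Real.exp (-2 * lam * T) ≤
        (p 0 ^ 2 + q 0 ^ 2) * lyapFactor lam θ₀ := by
  obtain ⟨r, θ₀, hp0, hq0⟩ := exists_polar (p 0) (q 0)
  -- `m` and `n` are the cosine and the sine of twice the polar angle of `(p, q)`.
  set m : ℝ → ℝ := fun s => (p s ^ 2 - q s ^ 2) / (p s ^ 2 + q s ^ 2) with hm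
  set n : ℝ → ℝ := fun s => 2 * p s * q s / (p s ^ 2 + q s ^ 2) with hn
  have hzero : ∀ s, p s ^ 2 + q s ^ 2 = 0 → p s = 0 ∧ q s = 0 := fun s h =>
    ⟨by nlinarith [sq_nonneg (p s), sq_nonneg (q s)],
      by nlinarith [sq_nonneg (p s), sq_nonneg (q s)]⟩
  have hmR : ∀ s, m s * (p s ^ 2 + q s ^ 2) = p s ^ 2 - q s ^ 2 := by
    intro s
    by_cases h : p s ^ 2 + q s ^ 2 = 0
    · obtain ⟨h1, h2⟩ := hzero s h
      simp [hm, h1, h2]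
    · exact div_mul_cancel₀ _ h
  have hnq : ∀ s, n s * q s = p s * (1 - m s) := by
    intro s
    by_cases h : p s ^ 2 + q s ^ 2 = 0
    · obtain ⟨h1, h2⟩ := hzero s h
      simp [h1, h2]
    · simp only [hm, hn]; field_simp; ring
  have hnp : ∀ s, n s * p s = q s * (1 + m s) := by
    intro s
    by_cases h : p s ^ 2 + q s ^ 2 = 0
    · obtain ⟨h1, h2⟩ := hzero s h
      simp [h1, h2]
    · simp only [hm, hn]; field_simp; ring
  have hm1 : ∀ s, |m s| ≤ 1 := by
    intro s
    simp only [hm]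
    rw [abs_div, abs_of_nonneg (by positivity : 0 ≤ p s ^ 2 + q s ^ 2)]
    apply div_le_one_of_le₀ _ (by positivity)
    rw [abs_le]
    constructor <;> nlinarith [sq_nonneg (p s), sq_nonneg (q s)]
  have hn1 : ∀ s, |n s| ≤ 1 := by
    intro s
    simp only [hn]
    rw [abs_div, abs_of_nonneg (by positivity : 0 ≤ p s ^ 2 + q s ^ 2)]
    apply div_le_one_of_le₀ _ (by positivity)
    rw [abs_le]
    constructor <;> nlinarith [sq_nonneg (p s + q s), sq_nonneg (p s - q s)]
  have hmm : Measurable m := by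
    have := hp.measurable
    have := hq.measurable
    fun_prop
  set ω : ℝ → ℝ := fun s => 5 / 4 + e s * m s with hω
  have hωm : Measurable ω := by fun_prop
  have hωi : ∀ a b, IntervalIntegrable ω volume a b := by
    refine intervalIntegrable_of_measurable_of_abs_le (C := 2) hωm fun s => ?_
    have h1 : |e s * m s| ≤ 3 / 4 := by
      rw [abs_mul]
      nlinarith [abs_nonneg (e s), abs_nonneg (m s), hbd s, hm1 s]
    rw [abs_le] at h1 ⊢
    simp only [hω]
    constructor <;> linarith
  have hei : ∀ c a b, IntervalIntegrable (fun s => c + e s) volume a b := fun c a b =>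
    intervalIntegrable_const.add (intervalIntegrable_of_measurable_of_abs_le he hbd a b)
  have hpi' : ∀ a b, IntervalIntegrable (fun s => (e s - 5 / 4) * q s) volume a b := fun a b => by
    refine IntervalIntegrable.mul_continuousOn ?_ hq.continuousOn
    simpa [sub_eq_neg_add] using hei (-(5 / 4)) a b
  have hqi' : ∀ a b, IntervalIntegrable (fun s => (5 / 4 + e s) * p s) volume a b := fun a b =>
    (hei (5 / 4) a b).mul_continuousOn hp.continuousOn
  -- `P` and `Q` agree with `p` and `q` for `t ≥ 0` and, being primitives on all of `ℝ`, are
  -- absolutely continuous with a two-sided derivative almost everywhere.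
  set P : ℝ → ℝ := fun t => p 0 + ∫ s in (0 : ℝ)..t, (e s - 5 / 4) * q s with hP
  set Q : ℝ → ℝ := fun t => q 0 + ∫ s in (0 : ℝ)..t, (5 / 4 + e s) * p s with hQ
  set θ : ℝ → ℝ := fun t => θ₀ + ∫ s in (0 : ℝ)..t, ω s with hθ
  have ac_const : ∀ (c T : ℝ), AbsolutelyContinuousOnInterval (fun _ : ℝ => c) 0 T :=
    fun c T => (contDiff_const.contDiffOn).absolutelyContinuousOnInterval
  have acP : ∀ T, AbsolutelyContinuousOnInterval P 0 T := fun T =>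
    (ac_const _ T).fun_add
      ((hpi' 0 T).absolutelyContinuousOnInterval_intervalIntegral Set.left_mem_uIcc)
  have acQ : ∀ T, AbsolutelyContinuousOnInterval Q 0 T := fun T =>
    (ac_const _ T).fun_add
      ((hqi' 0 T).absolutelyContinuousOnInterval_intervalIntegral Set.left_mem_uIcc)
  have acθ : ∀ T, AbsolutelyContinuousOnInterval θ 0 T := fun T =>
    (ac_const _ T).fun_add
      ((hωi 0 T).absolutelyContinuousOnInterval_intervalIntegral Set.left_mem_uIcc)
  have acexp : ∀ c T, AbsolutelyContinuousOnInterval (fun t => Real.exp (c * t)) 0 T :=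
    fun c T => (by fun_prop : ContDiff ℝ 1 fun t : ℝ => Real.exp (c * t)).contDiffOn
      |>.absolutelyContinuousOnInterval
  have accos : ∀ T, AbsolutelyContinuousOnInterval (fun t => Real.cos (θ t)) 0 T :=
    fun T => ac_comp_lipschitz Real.lipschitzWith_cos (acθ T)
  have acsin : ∀ T, AbsolutelyContinuousOnInterval (fun t => Real.sin (θ t)) 0 T :=
    fun T => ac_comp_lipschitz Real.lipschitzWith_sin (acθ T)
  have hder : ∀ T, 0 ≤ T → ∀ᵐ t, t ∈ Set.uIcc 0 T →
      0 ≤ t ∧ HasDerivAt P ((e t - 5 / 4) * Q t) t ∧ HasDerivAt Q ((5 / 4 + e t) * P t) t ∧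
        HasDerivAt θ (ω t) t := by
    intro T hT
    filter_upwards [(hpi' 0 T).ae_hasDerivAt_integral, (hqi' 0 T).ae_hasDerivAt_integral,
      (hωi 0 T).ae_hasDerivAt_integral] with t h1 h2 h3 ht
    have ht0 : 0 ≤ t := by
      rw [Set.uIcc_of_le hT] at ht
      exact ht.1
    have e1 : P t = p t := (hpi t ht0).symm
    have e2 : Q t = q t := (hqi t ht0).symm
    rw [e1, e2]
    exact ⟨ht0, (h1 ht 0 Set.left_mem_uIcc).const_add _, (h2 ht 0 Set.left_mem_uIcc).const_add _,
      (h3 ht 0 Set.left_mem_uIcc).const_add _⟩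
  have hPp : ∀ t, 0 ≤ t → P t = p t := fun t ht => (hpi t ht).symm
  have hQq : ∀ t, 0 ≤ t → Q t = q t := fun t ht => (hqi t ht).symm
  have hθ0 : θ 0 = θ₀ := by simp [hθ]
  -- `v = Q cos θ - P sin θ` satisfies `v' = e n v` with `|e n| ≤ 3/4`, and `v 0 = 0`.
  have hv : ∀ T, 0 ≤ T → Q T * Real.cos (θ T) - P T * Real.sin (θ T) = 0 := by
    intro T hT
    set v : ℝ → ℝ := fun t => Q t * Real.cos (θ t) - P t * Real.sin (θ t) with hvdef
    have acv : AbsolutelyContinuousOnInterval v 0 T :=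
      ((acQ T).fun_mul (accos T)).fun_sub ((acP T).fun_mul (acsin T))
    have hle := ac_le_of_ae_deriv_nonpos hT ((acv.fun_mul acv).fun_mul (acexp (-2) T)) (by
      filter_upwards [hder T hT] with t ht hmem
      obtain ⟨ht0, hdP, hdQ, hdθ⟩ := ht hmem
      have hdv : HasDerivAt v (e t * n t * v t) t := by
        have := (hdQ.mul hdθ.cos).sub (hdP.mul hdθ.sin)
        refine this.congr_deriv ?_
        simp only [hvdef, hPp t ht0, hQq t ht0, hω]
        linear_combination (-(e t) * Real.cos (θ t)) * hnq t + e t * Real.sin (θ t) * hnp t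
      have hde : HasDerivAt (fun t => Real.exp (-2 * t)) (Real.exp (-2 * t) * (-2)) t := by
        simpa using ((hasDerivAt_id t).const_mul (-2)).exp
      refine ⟨_, (hdv.mul hdv).mul hde, ?_⟩
      have h1 : e t * n t ≤ 3 / 4 := by
        refine (le_abs_self _).trans ?_
        rw [abs_mul]
        nlinarith [abs_nonneg (e t), abs_nonneg (n t), hbd t, hn1 t]
      have h2 : 0 ≤ v t ^ 2 * Real.exp (-2 * t) * (1 - e t * n t) :=
        mul_nonneg (by positivity) (by linarith)
      simp only [Pi.mul_apply]
      nlinarith)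
    have hv0 : v 0 = 0 := by
      have h1 : P 0 = p 0 := hPp 0 le_rfl
      have h2 : Q 0 = q 0 := hQq 0 le_rfl
      simp only [hvdef, hθ0, h1, h2]
      rw [hp0, hq0]
      ring
    rw [hv0] at hle
    have h3 : 0 < Real.exp (-2 * T) := Real.exp_pos _
    have h4 : v T * v T ≤ 0 := by
      by_contra hcon
      push Not at hcon
      have := mul_pos hcon h3
      linarith
    exact mul_self_eq_zero.1 (le_antisymm h4 (mul_self_nonneg _))
  obtain ⟨K, hK⟩ := exists_lyapFactor_lipschitz hlam
  refine ⟨θ₀, θ, fun T hT => ?_⟩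
  have acR : AbsolutelyContinuousOnInterval (fun t => P t * P t + Q t * Q t) 0 T :=
    ((acP T).fun_mul (acP T)).fun_add ((acQ T).fun_mul (acQ T))
  have hle := ac_le_of_ae_deriv_nonpos hT
    ((acR.fun_mul (ac_comp_lipschitz hK (acθ T))).fun_mul (acexp (-2 * lam) T)) (by
      filter_upwards [hder T hT] with t ht hmem
      obtain ⟨ht0, hdP, hdQ, hdθ⟩ := ht hmem
      have hde : HasDerivAt (fun t => Real.exp (-2 * lam * t))
          (Real.exp (-2 * lam * t) * (-2 * lam)) t := by
        simpa using ((hasDerivAt_id t).const_mul (-2 * lam)).exp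
      have hdW : HasDerivAt (fun t => lyapFactor lam (θ t))
          (lyapFactor lam (θ t) * (-2 * bestGrowth lam (θ t)) * ω t) t :=
        (hasDerivAt_lyapFactor lam (θ t)).comp t hdθ
      refine ⟨_, (((hdP.mul hdP).add (hdQ.mul hdQ)).mul hdW).mul hde, ?_⟩
      have hvt := hv t ht0
      have hcs := Real.sin_sq_add_cos_sq (θ t)
      have hmR := hmR t
      rw [hPp t ht0, hQq t ht0] at *
      have hR : 0 ≤ p t ^ 2 + q t ^ 2 := by positivity
      set c := Real.cos (θ t)
      set s := Real.sin (θ t)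
      -- Since `v = 0`, the vector `(p, q)` is a multiple of `(cos θ, sin θ)`.
      have hpu : p t = (p t * c + q t * s) * c := by
        linear_combination (-p t) * hcs - s * hvt
      have hqu : q t = (p t * c + q t * s) * s := by
        linear_combination (-q t) * hcs + c * hvt
      have hsin : (p t ^ 2 + q t ^ 2) * Real.sin (2 * θ t) = 2 * p t * q t := by
        rw [Real.sin_two_mul]
        change _ * (2 * s * c) = _
        generalize p t * c + q t * s = u at hpu hqu
        rw [hpu, hqu]
        linear_combination 2 * u ^ 2 * s * c * hcs
      have hcos : (p t ^ 2 + q t ^ 2) * Real.cos (2 * θ t) = p t ^ 2 - q t ^ 2 := by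
        rw [Real.cos_two_mul']
        change _ * (c ^ 2 - s ^ 2) = _
        generalize p t * c + q t * s = u at hpu hqu
        rw [hpu, hqu]
        linear_combination u ^ 2 * (c ^ 2 - s ^ 2) * hcs
      -- Up to a positive factor, `hmain` says that the derivative is nonpositive.
      have hgr := growth_le_bestGrowth lam (θ t) (hbd t)
      have hmain : 4 * e t * p t * q t - 2 * bestGrowth lam (θ t) * (ω t * (p t ^ 2 + q t ^ 2))
          - 2 * lam * (p t ^ 2 + q t ^ 2) ≤ 0 := by
        have h1 := mul_le_mul_of_nonneg_left hgr hR
        have h2 : ω t * (p t ^ 2 + q t ^ 2) = (p t ^ 2 + q t ^ 2) * angSpeed (e t) (θ t) := by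
          simp only [hω, angSpeed]
          linear_combination e t * hmR - e t * hcos
        have h3 : 4 * e t * p t * q t =
            2 * e t * ((p t ^ 2 + q t ^ 2) * Real.sin (2 * θ t)) := by
          rw [hsin]; ring
        rw [h2, h3]
        linarith
      have hWE : 0 < lyapFactor lam (θ t) * Real.exp (-2 * lam * t) :=
        mul_pos (Real.exp_pos _) (Real.exp_pos _)
      have := mul_nonneg hWE.le (neg_nonneg.2 hmain)
      simp only [Pi.mul_apply, Pi.add_apply, hPp t ht0, hQq t ht0]
      linarith)
  simp only [hPp T hT, hQq T hT, hPp 0 le_rfl, hQq 0 le_rfl, hθ0, mul_zero, Real.exp_zero,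
    mul_one] at hle
  simpa only [sq] using hle

/-- The convex set of matrices whose exponent is computed. -/
def switchSet : Set (Matrix (Fin 2) (Fin 2) ℝ) :=
  convexHull ℝ {!![0, -2; 1/2, 0], !![0, -1/2; 2, 0]}

theorem mem_switchSet_iff (A : Matrix (Fin 2) (Fin 2) ℝ) :
    A ∈ switchSet ↔ ∃ e : ℝ, |e| ≤ 3 / 4 ∧ A = !![0, e - 5 / 4; 5 / 4 + e, 0] := by
  rw [switchSet, convexHull_pair, segment_eq_image]
  constructor
  · rintro ⟨b, ⟨hb0, hb1⟩, rfl⟩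
    refine ⟨3 / 2 * b - 3 / 4, ?_, ?_⟩
    · rw [abs_le]
      constructor <;> linarith
    · ext i j
      fin_cases i <;> fin_cases j <;> simp <;> ring
  · rintro ⟨e, he, rfl⟩
    rw [abs_le] at he
    refine ⟨2 / 3 * (e + 3 / 4), ⟨by linarith, by linarith⟩, ?_⟩
    ext i j
    fin_cases i <;> fin_cases j <;> simp <;> ring

theorem eNorm_fin_two (v : Fin 2 → ℝ) : eNorm v = Real.sqrt (v 0 ^ 2 + v 1 ^ 2) := by
  simp [eNorm, Fin.sum_univ_two]

/-- Every trajectory grows at most like `exp (lam t)`, up to a uniform constant. -/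
theorem exists_eNorm_trajectory_le {lam : ℝ}
    (hlam : ∫ θ in (0 : ℝ)..Real.pi, bestGrowth lam θ = 0) :
    ∃ C : ℝ, 0 ≤ C ∧ ∀ x, IsTrajectory switchSet x → ∀ T, 0 ≤ T →
      eNorm (x T) ≤ Real.exp (C + lam * T) * eNorm (x 0) := by
  obtain ⟨C, hC0, hC⟩ := exists_abs_le_of_periodic (bestGrowthInt_periodic hlam)
    (continuous_iff_continuousAt.2 fun θ => (hasDerivAt_bestGrowthInt lam θ).continuousAt)
  refine ⟨2 * C, by linarith, ?_⟩
  rintro x ⟨hx, A, hAm, hAS, hAi, hAx⟩ T hT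
  -- The switching law is only constrained for `s ≥ 0`, hence the truncation.
  set e : ℝ → ℝ := fun s => if 0 ≤ s then A s 1 0 - 5 / 4 else 0 with he
  have hem : Measurable e :=
    Measurable.ite measurableSet_Ici ((hAm 1 0).sub_const _) measurable_const
  have hA : ∀ s, 0 ≤ s → |e s| ≤ 3 / 4 ∧ A s = !![0, e s - 5 / 4; 5 / 4 + e s, 0] := by
    intro s hs
    obtain ⟨e', he', hAe⟩ := (mem_switchSet_iff _).1 (hAS s hs)
    have : e s = e' := by simp [he, hs, hAe]
    rw [this]
    exact ⟨he', hAe⟩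
  have hbd : ∀ s, |e s| ≤ 3 / 4 := by
    intro s
    by_cases hs : 0 ≤ s
    · exact (hA s hs).1
    · simp only [he, if_neg hs]
      norm_num
  have hcomp : ∀ (i : Fin 2) (t : ℝ), 0 ≤ t →
      x t i = x 0 i + ∫ s in (0 : ℝ)..t, (A s).mulVec (x s) i := by
    intro i t ht
    have h := (ContinuousLinearMap.proj (R := ℝ) (φ := fun _ : Fin 2 => ℝ) i).intervalIntegral_comp_comm
      (hAi t ht)
    simp only [ContinuousLinearMap.proj_apply] at h
    rw [h]
    exact congrFun (hAx t ht) i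
  have hpi : ∀ t, 0 ≤ t → x t 0 = x 0 0 + ∫ s in (0 : ℝ)..t, (e s - 5 / 4) * x s 1 := by
    intro t ht
    rw [hcomp 0 t ht]
    congr 1
    apply intervalIntegral.integral_congr
    intro s hs
    rw [Set.uIcc_of_le ht] at hs
    simp only [(hA s hs.1).2]
    simp [Matrix.mulVec, dotProduct, Fin.sum_univ_two]
  have hqi : ∀ t, 0 ≤ t → x t 1 = x 0 1 + ∫ s in (0 : ℝ)..t, (5 / 4 + e s) * x s 0 := by
    intro t ht
    rw [hcomp 1 t ht]
    congr 1
    apply intervalIntegral.integral_congr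
    intro s hs
    rw [Set.uIcc_of_le ht] at hs
    simp only [(hA s hs.1).2]
    simp [Matrix.mulVec, dotProduct, Fin.sum_univ_two]
  obtain ⟨θ₀, θ, hθ⟩ := solution_sq_le hlam (p := fun t => x t 0) (q := fun t => x t 1)
    (by fun_prop) (by fun_prop) hem hbd hpi hqi
  have h := hθ T hT
  have h1 : Real.exp (-(2 * C)) ≤ lyapFactor lam (θ T) :=
    Real.exp_le_exp.2 (by linarith [(abs_le.1 (hC (θ T))).2])
  have h2 : lyapFactor lam θ₀ ≤ Real.exp (2 * C) :=
    Real.exp_le_exp.2 (by linarith [(abs_le.1 (hC θ₀)).1])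
  have h3 : (x T 0 ^ 2 + x T 1 ^ 2) * Real.exp (-(2 * C)) * Real.exp (-2 * lam * T) ≤
      (x 0 0 ^ 2 + x 0 1 ^ 2) * Real.exp (2 * C) := by
    refine le_trans ?_ (h.trans ?_)
    · gcongr
    · gcongr
  have h4 : x T 0 ^ 2 + x T 1 ^ 2 ≤
      Real.exp (2 * C + lam * T) ^ 2 * (x 0 0 ^ 2 + x 0 1 ^ 2) := by
    have h5 := mul_le_mul_of_nonneg_right h3 (Real.exp_pos (2 * C + 2 * lam * T)).le
    have h6 : Real.exp (-(2 * C)) * Real.exp (-2 * lam * T) *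
        Real.exp (2 * C + 2 * lam * T) = 1 := by
      rw [← Real.exp_add, ← Real.exp_add, Real.exp_eq_one_iff]
      ring
    have h7 : Real.exp (2 * C) * Real.exp (2 * C + 2 * lam * T) =
        Real.exp (2 * C + lam * T) ^ 2 := by
      rw [← Real.exp_add, ← Real.exp_nat_mul]
      congr 1
      push_cast
      ring
    calc x T 0 ^ 2 + x T 1 ^ 2
        = (x T 0 ^ 2 + x T 1 ^ 2) * Real.exp (-(2 * C)) * Real.exp (-2 * lam * T) *
          Real.exp (2 * C + 2 * lam * T) := by
          linear_combination (-(x T 0 ^ 2 + x T 1 ^ 2)) * h6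
      _ ≤ _ := h5
      _ = _ := by rw [← h7]; ring
  rw [eNorm_fin_two, eNorm_fin_two]
  refine (Real.sqrt_le_sqrt h4).trans_eq ?_
  rw [Real.sqrt_mul (by positivity), Real.sqrt_sq (Real.exp_pos _).le]

/-! ### The optimal feedback and its trajectories -/

/-- The feedback attaining the best growth at the polar angle `θ`. -/
noncomputable def bestField (lam θ : ℝ) : ℝ :=
  if angGrowth lam (-3 / 4) θ ≤ angGrowth lam (3 / 4) θ then 3 / 4 else -3 / 4

theorem bestField_cases (lam θ : ℝ) : bestField lam θ = 3 / 4 ∨ bestField lam θ = -3 / 4 := by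
  unfold bestField
  split_ifs <;> simp

theorem abs_bestField_le (lam θ : ℝ) : |bestField lam θ| ≤ 3 / 4 := by
  rcases bestField_cases lam θ with h | h <;> rw [h]
  · exact abs_three_quarters
  · exact abs_neg_three_quarters

theorem bestGrowth_mul_angSpeed (lam θ : ℝ) :
    bestGrowth lam θ * angSpeed (bestField lam θ) θ =
      bestField lam θ * Real.sin (2 * θ) - lam := by
  have h : bestGrowth lam θ = angGrowth lam (bestField lam θ) θ := by
    unfold bestGrowth bestField
    split_ifs with h
    · exact max_eq_left h
    · exact max_eq_right (not_le.1 h).le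
  rw [h, angGrowth, div_mul_cancel₀]
  exact (angSpeed_pos (abs_bestField_le lam θ) θ).ne'

theorem continuous_angGrowth_right (lam : ℝ) {e : ℝ} (he : |e| ≤ 3 / 4) :
    Continuous (angGrowth lam e) :=
  (continuous_angGrowth he).comp (f := fun θ : ℝ => (lam, θ)) (by fun_prop)

theorem measurable_bestField (lam : ℝ) : Measurable (bestField lam) :=
  Measurable.ite
    (measurableSet_le (continuous_angGrowth_right lam abs_neg_three_quarters).measurable
      (continuous_angGrowth_right lam abs_three_quarters).measurable)
    measurable_const measurable_const

theorem bestField_periodic (lam : ℝ) : Function.Periodic (bestField lam) Real.pi := by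
  intro θ
  simp only [bestField, angGrowth_add_pi]

/-- The switching angles: both extreme fields give the same growth per unit angle. -/
def switchAngles (lam : ℝ) : Set ℝ :=
  {θ | angGrowth lam (-3 / 4) θ = angGrowth lam (3 / 4) θ}

/-- At a switching angle `θ` one has `5 sin 2θ + 4 lam cos 2θ = 0`, that is,
`sin (2θ + arctan (4 lam / 5)) = 0`. -/
theorem countable_switchAngles (lam : ℝ) : (switchAngles lam).Countable := by
  set φ := Real.arctan (4 * lam / 5) with hφ
  have hsub : switchAngles lam ⊆ Set.range fun k : ℤ => (k * Real.pi - φ) / 2 := by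
    intro θ hθ
    have h1 := (angSpeed_pos abs_three_quarters θ).ne'
    have h2 := (angSpeed_pos abs_neg_three_quarters θ).ne'
    simp only [switchAngles, angGrowth, Set.mem_ofPred_eq] at hθ
    rw [div_eq_div_iff h2 h1] at hθ
    unfold angSpeed at hθ
    have h3 : Real.sin (2 * θ) + 4 * lam / 5 * Real.cos (2 * θ) = 0 := by
      linear_combination (-8 / 15) * hθ
    have hc := (Real.cos_arctan_pos (4 * lam / 5)).ne'
    have ht : Real.sin φ = 4 * lam / 5 * Real.cos φ := by
      have h := Real.tan_arctan (4 * lam / 5)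
      rw [Real.tan_eq_sin_div_cos, div_eq_iff hc] at h
      exact h
    have h4 : Real.sin (2 * θ + φ) = 0 := by
      rw [Real.sin_add, ht]
      linear_combination Real.cos φ * h3
    obtain ⟨k, hk⟩ := Real.sin_eq_zero_iff.1 h4
    refine ⟨k, ?_⟩
    simp only
    rw [hk]
    ring
  exact (Set.countable_range _).mono hsub

theorem continuousAt_bestField {lam θ : ℝ} (h : θ ∉ switchAngles lam) :
    ContinuousAt (bestField lam) θ := by
  have c1 := (continuous_angGrowth_right lam abs_neg_three_quarters).continuousAt (x := θ)
  have c2 := (continuous_angGrowth_right lam abs_three_quarters).continuousAt (x := θ)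
  rcases lt_or_gt_of_ne h with h | h
  · refine (continuousAt_const (y := (3 / 4 : ℝ))).congr ?_
    filter_upwards [c1.eventually_lt c2 h] with s hs
    simp [bestField, hs.le]
  · refine (continuousAt_const (y := (-3 / 4 : ℝ))).congr ?_
    filter_upwards [c2.eventually_lt c1 h] with s hs
    simp [bestField, hs]

/-- The polar angle of the feedback trajectory. It is the inverse function of the time needed to
reach a given angle, so that discontinuities of the feedback cause no difficulty. -/
theorem exists_angle (lam θ₀ : ℝ) : ∃ (Θ : ℝ → ℝ) (T : ℝ) (S : Set ℝ), 0 < T ∧ Continuous Θ ∧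
    Θ 0 = θ₀ ∧ (∀ t, Θ (t + T) = Θ t + 2 * Real.pi) ∧ S.Countable ∧
    ∀ t, t ∉ S → HasDerivAt Θ (angSpeed (bestField lam (Θ t)) (Θ t)) t := by
  set k : ℝ → ℝ := fun θ => (angSpeed (bestField lam θ) θ)⁻¹ with hk
  have hpos : ∀ θ, 0 < angSpeed (bestField lam θ) θ := fun θ =>
    angSpeed_pos (abs_bestField_le lam θ) θ
  have hk1 : ∀ θ, 1 / 2 ≤ k θ := fun θ => by
    rw [hk, one_div]
    exact inv_anti₀ (hpos θ) (angSpeed_le (abs_bestField_le lam θ) θ)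
  have hk2 : ∀ θ, |k θ| ≤ 2 := fun θ => by
    rw [abs_of_pos (inv_pos.2 (hpos θ))]
    have := inv_anti₀ (by norm_num) (angSpeed_ge (abs_bestField_le lam θ) θ)
    norm_num at this ⊢
    exact this
  have hkm : Measurable k := by
    have := measurable_bestField lam
    simp only [hk, angSpeed]
    fun_prop
  have hki := intervalIntegrable_of_measurable_of_abs_le hkm hk2
  have hkper : Function.Periodic k (2 * Real.pi) := by
    have h1 : Function.Periodic k Real.pi := by
      intro θ
      have h : 2 * (θ + Real.pi) = 2 * θ + 2 * Real.pi := by ring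
      simp only [hk, bestField_periodic lam θ, angSpeed, h, Real.cos_add_two_pi]
    simpa using h1.nsmul 2
  set τ : ℝ → ℝ := fun θ => ∫ s in θ₀..θ, k s with hτ
  have hsub : ∀ a b, a ≤ b → (b - a) / 2 ≤ τ b - τ a := by
    intro a b hab
    rw [hτ, intervalIntegral.integral_interval_sub_left (hki _ _) (hki _ _)]
    have := intervalIntegral.integral_mono_on hab (intervalIntegrable_const (c := (1 / 2 : ℝ)))
      (hki a b) fun s _ => hk1 s
    rw [intervalIntegral.integral_const, smul_eq_mul] at this
    linarith
  have hτ0 : τ θ₀ = 0 := intervalIntegral.integral_same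
  have hmono : StrictMono τ := fun a b hab => by linarith [hsub a b hab.le]
  have hcont : Continuous τ := intervalIntegral.continuous_primitive hki θ₀
  have htop : Tendsto τ atTop atTop := by
    refine tendsto_atTop_mono' _ ?_ ((tendsto_id.atTop_add
      (tendsto_const_nhds (x := -θ₀))).atTop_div_const (by norm_num : (0 : ℝ) < 2))
    filter_upwards [eventually_ge_atTop θ₀] with b hb
    have := hsub _ _ hb
    simp only [id]
    linarith
  have hbot : Tendsto τ atBot atBot := by
    refine tendsto_atBot_mono' _ ?_ ((tendsto_id.atBot_add
      (tendsto_const_nhds (x := -θ₀))).atBot_div_const (by norm_num : (0 : ℝ) < 2))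
    filter_upwards [eventually_le_atBot θ₀] with b hb
    have := hsub _ _ hb
    simp only [id]
    linarith
  set Φ := hmono.orderIsoOfSurjective τ (hcont.surjective htop hbot) with hΦ
  have hright : ∀ t, τ (Φ.symm t) = t := fun t =>
    hmono.orderIsoOfSurjective_self_symm_apply τ (hcont.surjective htop hbot) t
  have hshift : ∀ θ, τ (θ + 2 * Real.pi) = τ θ + τ (θ₀ + 2 * Real.pi) := by
    intro θ
    have h := hkper.intervalIntegral_add_eq θ θ₀
    simp only [hτ]
    rw [← h, intervalIntegral.integral_add_adjacent_intervals (hki _ _) (hki _ _)]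
  refine ⟨Φ.symm, τ (θ₀ + 2 * Real.pi), Φ.symm ⁻¹' switchAngles lam, ?_, Φ.symm.continuous, ?_,
    ?_, ?_, ?_⟩
  · rw [← hτ0]
    exact hmono (by linarith [Real.pi_pos])
  · apply hmono.injective
    rw [hright, hτ0]
  · intro t
    apply hmono.injective
    rw [hshift (Φ.symm t), hright, hright]
  · exact (countable_switchAngles lam).preimage Φ.symm.injective
  · intro t ht
    have hb : ContinuousAt k (Φ.symm t) := by
      have h1 := continuousAt_bestField ht
      refine ContinuousAt.inv₀ ?_ (hpos _).ne'
      unfold angSpeed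
      fun_prop
    have hd : HasDerivAt τ (k (Φ.symm t)) (Φ.symm t) :=
      intervalIntegral.integral_hasDerivAt_right (hki _ _)
        hkm.stronglyMeasurable.stronglyMeasurableAtFilter hb
    have := hd.of_local_left_inverse Φ.symm.continuous.continuousAt
      (inv_pos.2 (hpos _)).ne' (Filter.Eventually.of_forall hright)
    simpa [hk] using this

/-- The matrix of the feedback system, shifted by the scalar matrix `mu`. -/
noncomputable def fieldMatrix (mu b : ℝ) : Matrix (Fin 2) (Fin 2) ℝ :=
  (1 - b) • !![mu, -2; 1/2, mu] + b • !![mu, -1/2; 2, mu]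

theorem fieldMatrix_mulVec (mu b : ℝ) (v : Fin 2 → ℝ) :
    (fieldMatrix mu b).mulVec v =
      ![mu * v 0 + (3 / 2 * b - 2) * v 1, (1 / 2 + 3 / 2 * b) * v 0 + mu * v 1] := by
  ext i
  fin_cases i <;> simp [fieldMatrix, Matrix.mulVec, dotProduct, Fin.sum_univ_two] <;> ring

/-- From every starting point, the optimal feedback gives a bounded periodic curve `y`, bounded
away from the origin, whose rescalings `exp (mu t) y` solve the corresponding shifted systems:
`mu = 0` gives the periodic trajectory, `mu = lam` a trajectory of the original system. -/
theorem exists_feedback_trajectory {lam : ℝ}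
    (hlam : ∫ θ in (0 : ℝ)..Real.pi, bestGrowth lam θ = 0) :
    ∃ C : ℝ, ∀ w : Fin 2 → ℝ, ∃ (β : ℝ → ℝ) (y : ℝ → Fin 2 → ℝ) (T : ℝ),
      Measurable β ∧ (∀ t, β t ∈ Set.Icc (0 : ℝ) 1) ∧ Continuous y ∧ y 0 = w ∧ 0 < T ∧
      (∀ t, y (t + T) = y t) ∧ (∀ t, Real.exp (-C) * eNorm w ≤ eNorm (y t)) ∧
      ∀ mu : ℝ,
        (∀ t, IntervalIntegrable
          (fun s => (fieldMatrix (mu - lam) (β s)).mulVec (Real.exp (mu * s) • y s)) volume 0 t) ∧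
        ∀ t, Real.exp (mu * t) • y t =
          w + ∫ s in (0 : ℝ)..t, (fieldMatrix (mu - lam) (β s)).mulVec (Real.exp (mu * s) • y s) := by
  have hHc : Continuous (bestGrowthInt lam) :=
    continuous_iff_continuousAt.2 fun θ => (hasDerivAt_bestGrowthInt lam θ).continuousAt
  have hHp := bestGrowthInt_periodic hlam
  obtain ⟨C, hC0, hC⟩ := exists_abs_le_of_periodic hHp hHc
  refine ⟨2 * C, fun w => ?_⟩
  obtain ⟨r, θ₀, hw0, hw1⟩ := exists_polar (w 0) (w 1)
  obtain ⟨Θ, T, S, hT, hΘc, hΘ0, hΘT, hS, hΘd⟩ := exists_angle lam θ₀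
  set ρ : ℝ → ℝ := fun t => r * Real.exp (bestGrowthInt lam (Θ t) - bestGrowthInt lam θ₀) with hρ
  set y : ℝ → Fin 2 → ℝ := fun t => ![ρ t * Real.cos (Θ t), ρ t * Real.sin (Θ t)] with hy
  set β : ℝ → ℝ := fun t => 2 / 3 * (bestField lam (Θ t) + 3 / 4) with hβ
  have hρc : Continuous ρ := by fun_prop
  have hyc : Continuous y := by
    refine continuous_pi fun i => ?_
    fin_cases i
    · exact hρc.mul (Real.continuous_cos.comp hΘc)
    · exact hρc.mul (Real.continuous_sin.comp hΘc)
  have hβm : Measurable β :=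
    (((measurable_bestField lam).comp hΘc.measurable).add_const _).const_mul _
  have hβ01 : ∀ t, β t ∈ Set.Icc (0 : ℝ) 1 := by
    intro t
    have := abs_le.1 (abs_bestField_le lam (Θ t))
    simp only [hβ]
    constructor <;> linarith
  have hy0 : y 0 = w := by
    ext i
    fin_cases i
    · simp [hy, hρ, hΘ0, hw0]
    · simp [hy, hρ, hΘ0, hw1]
  refine ⟨β, y, T, hβm, hβ01, hyc, hy0, hT, ?_, ?_, ?_⟩
  · intro t
    have h : bestGrowthInt lam (Θ t + 2 * Real.pi) = bestGrowthInt lam (Θ t) := by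
      simpa using hHp.nsmul 2 (Θ t)
    simp only [hy, hρ, hΘT, h, Real.cos_add_two_pi, Real.sin_add_two_pi]
  · intro t
    have h1 : eNorm w = |r| := by
      rw [eNorm_fin_two, hw0, hw1, ← Real.sqrt_sq_eq_abs]
      congr 1
      linear_combination r ^ 2 * Real.sin_sq_add_cos_sq θ₀
    have h2 : eNorm (y t) = |r| * Real.exp (bestGrowthInt lam (Θ t) - bestGrowthInt lam θ₀) := by
      rw [eNorm_fin_two, ← abs_of_pos (Real.exp_pos (bestGrowthInt lam (Θ t) -
        bestGrowthInt lam θ₀)), ← abs_mul, ← Real.sqrt_sq_eq_abs]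
      congr 1
      simp only [hy, hρ, Matrix.cons_val_zero, Matrix.cons_val_one]
      linear_combination (r * Real.exp (bestGrowthInt lam (Θ t) - bestGrowthInt lam θ₀)) ^ 2 *
        Real.sin_sq_add_cos_sq (Θ t)
    rw [h1, h2, mul_comm]
    refine mul_le_mul_of_nonneg_left (Real.exp_le_exp.2 ?_) (abs_nonneg _)
    have := (abs_le.1 (hC (Θ t))).1
    have := (abs_le.1 (hC θ₀)).2
    linarith
  · intro mu
    have hint : ∀ t, IntervalIntegrable
        (fun s => (fieldMatrix (mu - lam) (β s)).mulVec (Real.exp (mu * s) • y s)) volume 0 t := by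
      intro t
      have hb : IntervalIntegrable β volume 0 t :=
        intervalIntegrable_of_measurable_of_abs_le (C := 1) hβm
          (fun s => abs_le.2 ⟨by linarith [(hβ01 s).1], (hβ01 s).2⟩) 0 t
      have hc : ∀ A : Matrix (Fin 2) (Fin 2) ℝ,
          Continuous fun s => A.mulVec (Real.exp (mu * s) • y s) := fun A =>
        (continuous_const (y := A)).matrix_mulVec (by fun_prop)
      have h := ((intervalIntegrable_const (c := (1 : ℝ)).sub hb).smul_continuousOn
          (hc !![mu - lam, -2; 1/2, mu - lam]).continuousOn).add
        (hb.smul_continuousOn (hc !![mu - lam, -1/2; 2, mu - lam]).continuousOn)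
      refine h.congr ?_
      intro s _
      simp only [fieldMatrix, Matrix.add_mulVec, Matrix.smul_mulVec]
    refine ⟨hint, fun t => ?_⟩
    -- The feedback jumps only at countably many times, so the fundamental theorem of calculus
    -- with a countable exceptional set applies.
    have hFTC := integral_eq_of_hasDerivAt_off_countable (fun s => Real.exp (mu * s) • y s)
      (fun s => (fieldMatrix (mu - lam) (β s)).mulVec (Real.exp (mu * s) • y s)) (a := 0) (b := t)
      hS (by fun_prop) (fun s hs => by
        have hd := hΘd s hs.2
        have hH : HasDerivAt (fun u => bestGrowthInt lam (Θ u))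
            (bestGrowth lam (Θ s) * angSpeed (bestField lam (Θ s)) (Θ s)) s :=
          (hasDerivAt_bestGrowthInt lam (Θ s)).comp s hd
        rw [bestGrowth_mul_angSpeed] at hH
        have hρd := ((hH.sub_const (bestGrowthInt lam θ₀)).exp).const_mul r
        have hde : HasDerivAt (fun u => Real.exp (mu * u)) (Real.exp (mu * s) * mu) s := by
          simpa using ((hasDerivAt_id s).const_mul mu).exp
        rw [hasDerivAt_pi]
        rw [fieldMatrix_mulVec]
        have hcs := Real.sin_sq_add_cos_sq (Θ s)
        intro i
        fin_cases i
        · refine (hde.mul (hρd.mul hd.cos)).congr_deriv ?_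
          simp only [hy, hρ, hβ, angSpeed, Real.sin_two_mul, Real.cos_two_mul', Pi.smul_apply, Pi.mul_apply,
            smul_eq_mul, Matrix.cons_val_zero, Matrix.cons_val_one, Fin.zero_eta]
          linear_combination (r * Real.exp (bestGrowthInt lam (Θ s) - bestGrowthInt lam θ₀) *
            Real.exp (mu * s) * bestField lam (Θ s) * Real.sin (Θ s)) * hcs
        · refine (hde.mul (hρd.mul hd.sin)).congr_deriv ?_
          simp only [hy, hρ, hβ, angSpeed, Real.sin_two_mul, Real.cos_two_mul', Pi.smul_apply, Pi.mul_apply,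
            smul_eq_mul, Matrix.cons_val_zero, Matrix.cons_val_one, Fin.mk_one]
          linear_combination (r * Real.exp (bestGrowthInt lam (Θ s) - bestGrowthInt lam θ₀) *
            Real.exp (mu * s) * bestField lam (Θ s) * Real.cos (Θ s)) * hcs) (hint t)
    rw [hFTC]
    simp [hy0]

/-! ### The value of the Lyapunov exponent -/

theorem eNorm_smul_of_nonneg {a : ℝ} (ha : 0 ≤ a) (v : Fin 2 → ℝ) :
    eNorm (a • v) = a * eNorm v := by
  rw [eNorm_fin_two, eNorm_fin_two, ← Real.sqrt_sq ha, ← Real.sqrt_mul (sq_nonneg _),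
    Real.sqrt_sq ha]
  congr 1
  simp only [Pi.smul_apply, smul_eq_mul]
  ring

theorem eNorm_pos {v : Fin 2 → ℝ} (hv : v ≠ 0) : 0 < eNorm v := by
  rw [eNorm_fin_two, Real.sqrt_pos]
  by_contra h
  apply hv
  have h0 : v 0 = 0 :=
    pow_eq_zero_iff two_ne_zero |>.1 (by linarith [sq_nonneg (v 0), sq_nonneg (v 1)])
  have h1 : v 1 = 0 :=
    pow_eq_zero_iff two_ne_zero |>.1 (by linarith [sq_nonneg (v 0), sq_nonneg (v 1)])
  ext i
  fin_cases i
  · exact h0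
  · exact h1

/-- The exponent of the switching system is the one for which the best growth over a half turn
is zero: trajectories are bounded by a multiple of `exp (lam t)`, and the feedback trajectory
attains this order of growth. -/
theorem Lambda_switchSet {lam : ℝ} (h0 : 0 ≤ lam)
    (hlam : ∫ θ in (0 : ℝ)..Real.pi, bestGrowth lam θ = 0) : Lambda switchSet = lam := by
  obtain ⟨C, hC0, hC⟩ := exists_eNorm_trajectory_le hlam
  obtain ⟨C', hC'⟩ := exists_feedback_trajectory hlam
  obtain ⟨β, y, -, hβm, hβ, hyc, hy0, -, -, hyl, hyt⟩ := hC' ![1, 0]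
  obtain ⟨hyi, hye⟩ := hyt lam
  have hw : (![1, 0] : Fin 2 → ℝ) ≠ 0 := fun h => by simpa using congrFun h 0
  have htraj : IsTrajectory switchSet fun t => Real.exp (lam * t) • y t := by
    refine ⟨by fun_prop, fun s => fieldMatrix (lam - lam) (β s), ?_, ?_, fun t _ => hyi t, ?_⟩
    · intro i j
      fin_cases i <;> fin_cases j <;> simp [fieldMatrix] <;> fun_prop
    · intro s _
      rw [mem_switchSet_iff]
      refine ⟨3 / 2 * β s - 3 / 4, abs_le.2 ⟨?_, ?_⟩, ?_⟩
      · linarith [(hβ s).1]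
      · linarith [(hβ s).2]
      · ext i j
        fin_cases i <;> fin_cases j <;> simp [fieldMatrix] <;> ring
    · intro t _
      simp only [mul_zero, Real.exp_zero, one_smul, hy0]
      exact hye t
  unfold Lambda
  apply Tendsto.limUnder_eq
  have hlim : ∀ c : ℝ, Tendsto (fun t : ℝ => lam + c / t) atTop (nhds lam) := fun c => by
    simpa using tendsto_const_nhds.add ((tendsto_const_nhds (x := c)).div_atTop tendsto_id)
  have hle : ∀ t : ℝ, 0 < t → ∀ r ∈ {r | ∃ x : ℝ → Fin 2 → ℝ, IsTrajectory switchSet x ∧ x 0 ≠ 0 ∧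
      r = (1 / t) * Real.log (eNorm (x t) / eNorm (x 0))}, r ≤ lam + C / t := by
    rintro t ht r ⟨x, hx, hx0, rfl⟩
    have hpos := eNorm_pos hx0
    have h1 : eNorm (x t) / eNorm (x 0) ≤ Real.exp (C + lam * t) :=
      (div_le_iff₀ hpos).2 (hC x hx t ht.le)
    have h2 : Real.log (eNorm (x t) / eNorm (x 0)) ≤ C + lam * t := by
      -- A trajectory ending at the origin would contribute the junk value `Real.log 0 = 0`,
      -- which is also below the bound.
      rcases (div_nonneg (Real.sqrt_nonneg _) hpos.le :
        0 ≤ eNorm (x t) / eNorm (x 0)).eq_or_lt with h | h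
      · rw [← h, Real.log_zero]
        positivity
      · exact (Real.log_le_iff_le_exp h).2 h1
    rw [one_div, inv_mul_le_iff₀ ht]
    refine h2.trans_eq ?_
    field_simp
    ring
  have hge : ∀ t : ℝ, 0 < t → ∃ r ∈ {r | ∃ x : ℝ → Fin 2 → ℝ, IsTrajectory switchSet x ∧ x 0 ≠ 0 ∧
      r = (1 / t) * Real.log (eNorm (x t) / eNorm (x 0))}, lam + -C' / t ≤ r := by
    intro t ht
    refine ⟨_, ⟨_, htraj, ?_, rfl⟩, ?_⟩
    · simp [hy0]
    · simp only [mul_zero, Real.exp_zero, one_smul, hy0]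
      have hpos := eNorm_pos hw
      have h1 : Real.exp (lam * t - C') ≤
          eNorm (Real.exp (lam * t) • y t) / eNorm ![1, 0] := by
        rw [le_div_iff₀ hpos, eNorm_smul_of_nonneg (Real.exp_pos _).le, sub_eq_add_neg,
          Real.exp_add, mul_assoc]
        exact mul_le_mul_of_nonneg_left (hyl t) (Real.exp_pos _).le
      have h2 := (Real.le_log_iff_exp_le ((Real.exp_pos _).trans_le h1)).2 h1
      rw [one_div, le_inv_mul_iff₀ ht]
      refine le_trans (le_of_eq ?_) h2
      field_simp
      ring
  refine tendsto_of_tendsto_of_tendsto_of_le_of_le' (hlim (-C')) (hlim C) ?_ ?_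
  · filter_upwards [eventually_gt_atTop 0] with t ht
    obtain ⟨r, hr, hrl⟩ := hge t ht
    exact hrl.trans (le_csSup ⟨_, fun r hr => hle t ht r hr⟩ hr)
  · filter_upwards [eventually_gt_atTop 0] with t ht
    obtain ⟨r, hr, -⟩ := hge t ht
    exact csSup_le ⟨r, hr⟩ (hle t ht)


theorem stmt_15 (lam : ℝ)
    (hlam : lam = Lambda (convexHull ℝ
      ({!![0, -2; 1/2, 0], !![0, -1/2; 2, 0]} : Set (Matrix (Fin 2) (Fin 2) ℝ))))
    (B₀ B₁ : Matrix (Fin 2) (Fin 2) ℝ)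
    (hB₀ : B₀ = !![-lam, -2; 1/2, -lam]) (hB₁ : B₁ = !![-lam, -1/2; 2, -lam])
    (w : Fin 2 → ℝ) :
    ∃ (β : ℝ → ℝ) (y : ℝ → Fin 2 → ℝ),
      Measurable β ∧ (∀ t, 0 ≤ t → β t ∈ Set.Icc (0:ℝ) 1) ∧
      Continuous y ∧ y 0 = w ∧
      (∀ t, 0 ≤ t →
        IntervalIntegrable (fun s => ((1 - β s) • B₀ + β s • B₁).mulVec (y s)) volume 0 t) ∧
      (∀ t, 0 ≤ t →
        y t = y 0 + ∫ s in (0:ℝ)..t, ((1 - β s) • B₀ + β s • B₁).mulVec (y s)) ∧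
      ∃ T > (0:ℝ), ∀ t, 0 ≤ t → y (t + T) = y t := by
  obtain ⟨lam', h0, hbal⟩ := exists_balanced
  obtain rfl : lam = lam' := hlam.trans (Lambda_switchSet h0 hbal)
  obtain ⟨C, hC⟩ := exists_feedback_trajectory hbal
  obtain ⟨β, y, T, hβm, hβ, hyc, hy0, hT, hper, -, hsol⟩ := hC w
  obtain ⟨hi, he⟩ := hsol 0
  simp only [zero_mul, Real.exp_zero, one_smul, zero_sub, fieldMatrix] at hi he
  subst hB₀ hB₁
  refine ⟨β, y, hβm, fun t _ => hβ t, hyc, hy0, fun t _ => hi t, fun t _ => ?_, T, hT,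
    fun t _ => hper t⟩
  rw [hy0]
  exact he t
end

section
/- Let λ := Λ(conv{[[0,-2],[1/2,0]], [[0,-1/2],[2,0]]}), define A₀ = [[0,0],[0,-1]], A₁ = [[-1,1],[-1,-1]], B₀ = [[-λ,-2],[1/2,-λ]], B₁ = [[-λ,-1/2],[2,-λ]] in M₂(ℝ), and set X₀ = A₀⊗I + I⊗B₀, X₁ = A₀⊗I + I⊗B₁, X₂ = A₁⊗I in M₄(ℝ), where ⊗ is the Kronecker product and I the 2×2 identity. Then the (unital not required) subalgebra of M₄(ℝ) generated by {X₀, X₁, X₂} is all of M₄(ℝ); consequently the convex hull 𝖷 of {X₀, X₁, X₂} is irreducible, i.e. there is no linear subspace V of ℝ⁴ with 0 < dim V < 4 and X·V ⊆ V for all X ∈ 𝖷. -/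
/-!
Write `J = [[0,1],[-1,0]]`, `D = diag(1,-1)`
and `S = [[0,1],[1,0]]`, and let `𝓐` be the algebra generated by `X₀, X₁, X₂`.

* `A₁` satisfies `A₁² + 2 A₁ + 2 = 0`, so `1` is a polynomial in `A₁` without constant term. Hence
  `1 ∈ 𝓐`, and `J ⊗ 1 = X₂ + 1 ∈ 𝓐`.
* `X₁ - X₀ = (3/2) (1 ⊗ S)`, so `1 ⊗ S ∈ 𝓐`.
* `Z = X₀ + X₁ + (2 lam + 1) 1 = D ⊗ 1 - (5/2) (1 ⊗ J)`, so `Z ∈ 𝓐`. As `S` is an involution anticommuting with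
  `J`, conjugation by `1 ⊗ S` flips the sign of the second term of `Z`; half-sum and half-difference
  of the two matrices put `D ⊗ 1` and `1 ⊗ J` in `𝓐`.

Both pairs `(J, D)` and `(J, S)` generate `M₂(ℝ)`, so `𝓐` contains every `P ⊗ 1` and `1 ⊗ Q`, hence
every `P ⊗ Q`, and these span `M₄(ℝ)`. For irreducibility, the matrices preserving a given
subspace form an algebra; if it contains `X₀, X₁, X₂` it is everything, and a nonzero subspace
preserved by all matrices is the whole space (`irreducibleSystem_of_adjoin_eq_top`).
-/

open MeasureTheory Filter Matrix Kronecker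

/-- A set of matrices generating the full matrix algebra has no nontrivial invariant subspace:
the rank-one matrices alone move a nonzero vector to any other vector. -/
lemma irreducibleSystem_of_adjoin_eq_top {n : Type*} [Fintype n] {s t : Set (Matrix n n ℝ)}
    (hs : NonUnitalAlgebra.adjoin ℝ s = ⊤) (hst : s ⊆ t) : IrreducibleSystem t := by
  rintro ⟨V, hpos, hlt, hV⟩
  have hall : ∀ M : Matrix n n ℝ, ∀ v ∈ V, M.mulVec v ∈ V := by
    intro M
    have hM : M ∈ NonUnitalAlgebra.adjoin ℝ s := by rw [hs]; trivial
    induction hM using NonUnitalAlgebra.adjoin_induction with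
    | mem x hx => exact hV x (hst hx)
    | add x y _ _ hx hy =>
      intro v hv
      rw [Matrix.add_mulVec]
      exact V.add_mem (hx v hv) (hy v hv)
    | zero => intro v _; simp
    | mul x y _ _ hx hy =>
      intro v hv
      rw [← Matrix.mulVec_mulVec]
      exact hx _ (hy v hv)
    | smul r x _ hx =>
      intro v hv
      rw [Matrix.smul_mulVec]
      exact V.smul_mem r (hx v hv)
  have hbot : V ≠ ⊥ := by
    rintro rfl
    simp at hpos
  obtain ⟨v, hv, hv0⟩ := V.exists_mem_ne_zero_of_ne_bot hbot
  have htop : V = ⊤ := by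
    refine Submodule.eq_top_iff'.2 fun w => ?_
    have h := V.smul_mem (v ⬝ᵥ v)⁻¹ (hall (Matrix.vecMulVec w v) v hv)
    have hvv : v ⬝ᵥ v ≠ 0 := fun h0 => hv0 (dotProduct_self_eq_zero.1 h0)
    have he : (v ⬝ᵥ v)⁻¹ • (Matrix.vecMulVec w v).mulVec v = w := by
      rw [Matrix.vecMulVec_mulVec]
      ext i
      simp only [Pi.smul_apply, smul_eq_mul, MulOpposite.smul_eq_mul_unop, MulOpposite.unop_op]
      field_simp
    rwa [he] at h
  rw [htop, finrank_top, Module.finrank_fintype_fun_eq_card] at hlt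
  exact lt_irrefl _ hlt

/-- `1`, `J`, `D` and `J * D` form a basis of the space of 2×2 real matrices. -/
lemma eq_combination_J_D (P : Matrix (Fin 2) (Fin 2) ℝ) :
    P = ((P 0 0 + P 1 1) / 2) • (1 : Matrix (Fin 2) (Fin 2) ℝ)
      + ((P 0 1 - P 1 0) / 2) • !![0, 1; -1, 0]
      + ((P 0 0 - P 1 1) / 2) • !![1, 0; 0, -1]
      - ((P 0 1 + P 1 0) / 2) • (!![0, 1; -1, 0] * !![1, 0; 0, -1]) := by
  ext i j
  fin_cases i <;> fin_cases j <;> simp <;> ring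

/-- `1`, `J`, `S` and `J * S` form a basis of the space of 2×2 real matrices. -/
lemma eq_combination_J_S (P : Matrix (Fin 2) (Fin 2) ℝ) :
    P = ((P 0 0 + P 1 1) / 2) • (1 : Matrix (Fin 2) (Fin 2) ℝ)
      + ((P 0 1 - P 1 0) / 2) • !![0, 1; -1, 0]
      + ((P 0 1 + P 1 0) / 2) • !![0, 1; 1, 0]
      + ((P 0 0 - P 1 1) / 2) • (!![0, 1; -1, 0] * !![0, 1; 1, 0]) := by
  ext i j
  fin_cases i <;> fin_cases j <;> simp <;> ring

/-- A matrix over a product index set is the sum of its blocks, each tensored with the matrix unit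
recording its position. -/
lemma eq_sum_kronecker_single (M : Matrix (Fin 2 × Fin 2) (Fin 2 × Fin 2) ℝ) :
    M = ∑ k, ∑ l, (Matrix.of fun i j => M (i, k) (j, l)) ⊗ₖ
      (Matrix.single k l (1 : ℝ)) := by
  ext ⟨i, k⟩ ⟨j, l⟩
  fin_cases k <;> fin_cases l <;> simp [Matrix.sum_apply, Matrix.single_apply]

/-- A non-unital algebra of matrices containing `1` and the generators `J ⊗ 1`, `D ⊗ 1`, `1 ⊗ J`,
`1 ⊗ S` of the two tensor factors is the full matrix algebra. -/
lemma eq_top_of_generators_mem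
    {T : NonUnitalSubalgebra ℝ (Matrix (Fin 2 × Fin 2) (Fin 2 × Fin 2) ℝ)} (h1 : 1 ∈ T)
    (hJ : !![0, 1; -1, 0] ⊗ₖ (1 : Matrix (Fin 2) (Fin 2) ℝ) ∈ T)
    (hD : !![1, 0; 0, -1] ⊗ₖ (1 : Matrix (Fin 2) (Fin 2) ℝ) ∈ T)
    (hJ' : (1 : Matrix (Fin 2) (Fin 2) ℝ) ⊗ₖ !![0, 1; -1, 0] ∈ T)
    (hS : (1 : Matrix (Fin 2) (Fin 2) ℝ) ⊗ₖ !![0, 1; 1, 0] ∈ T) : T = ⊤ := by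
  have hleft : ∀ P : Matrix (Fin 2) (Fin 2) ℝ, P ⊗ₖ (1 : Matrix (Fin 2) (Fin 2) ℝ) ∈ T := by
    intro P
    have hJD := mul_mem hJ hD
    rw [← Matrix.mul_kronecker_mul, mul_one] at hJD
    rw [eq_combination_J_D P, sub_eq_add_neg, ← neg_smul]
    simp only [Matrix.add_kronecker, Matrix.smul_kronecker, Matrix.one_kronecker_one]
    exact add_mem (add_mem (add_mem (SMulMemClass.smul_mem _ h1) (SMulMemClass.smul_mem _ hJ))
      (SMulMemClass.smul_mem _ hD))
      (SMulMemClass.smul_mem _ hJD)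
  have hright : ∀ Q : Matrix (Fin 2) (Fin 2) ℝ, (1 : Matrix (Fin 2) (Fin 2) ℝ) ⊗ₖ Q ∈ T := by
    intro Q
    have hJS := mul_mem hJ' hS
    rw [← Matrix.mul_kronecker_mul, mul_one] at hJS
    rw [eq_combination_J_S Q]
    simp only [Matrix.kronecker_add, Matrix.kronecker_smul, Matrix.one_kronecker_one]
    exact add_mem (add_mem (add_mem (SMulMemClass.smul_mem _ h1) (SMulMemClass.smul_mem _ hJ'))
      (SMulMemClass.smul_mem _ hS))
      (SMulMemClass.smul_mem _ hJS)
  refine NonUnitalAlgebra.eq_top_iff.2 fun M => ?_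
  rw [eq_sum_kronecker_single M]
  refine sum_mem fun k _ => sum_mem fun l _ => ?_
  have h := mul_mem (hleft (Matrix.of fun i j => M (i, k) (j, l)))
    (hright (Matrix.single k l (1 : ℝ)))
  rwa [← Matrix.mul_kronecker_mul, mul_one, one_mul] at h

theorem stmt_16 (lam : ℝ)
    (hlam : lam = Lambda (convexHull ℝ
      ({!![0, -2; 1/2, 0], !![0, -1/2; 2, 0]} : Set (Matrix (Fin 2) (Fin 2) ℝ))))
    (A₀ A₁ B₀ B₁ : Matrix (Fin 2) (Fin 2) ℝ)
    (hA₀ : A₀ = !![0, 0; 0, -1]) (hA₁ : A₁ = !![-1, 1; -1, -1])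
    (hB₀ : B₀ = !![-lam, -2; 1/2, -lam]) (hB₁ : B₁ = !![-lam, -1/2; 2, -lam])
    (X₀ X₁ X₂ : Matrix (Fin 2 × Fin 2) (Fin 2 × Fin 2) ℝ)
    (hX₀ : X₀ = A₀ ⊗ₖ (1 : Matrix (Fin 2) (Fin 2) ℝ) + (1 : Matrix (Fin 2) (Fin 2) ℝ) ⊗ₖ B₀)
    (hX₁ : X₁ = A₀ ⊗ₖ (1 : Matrix (Fin 2) (Fin 2) ℝ) + (1 : Matrix (Fin 2) (Fin 2) ℝ) ⊗ₖ B₁)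
    (hX₂ : X₂ = A₁ ⊗ₖ (1 : Matrix (Fin 2) (Fin 2) ℝ)) :
    NonUnitalAlgebra.adjoin ℝ
        ({X₀, X₁, X₂} : Set (Matrix (Fin 2 × Fin 2) (Fin 2 × Fin 2) ℝ)) = ⊤ ∧
      IrreducibleSystem (convexHull ℝ {X₀, X₁, X₂}) := by
  have hX : NonUnitalAlgebra.adjoin ℝ
      ({X₀, X₁, X₂} : Set (Matrix (Fin 2 × Fin 2) (Fin 2 × Fin 2) ℝ)) = ⊤ := by
    set T := NonUnitalAlgebra.adjoin ℝ
      ({X₀, X₁, X₂} : Set (Matrix (Fin 2 × Fin 2) (Fin 2 × Fin 2) ℝ)) with hT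
    have m0 : X₀ ∈ T := NonUnitalAlgebra.subset_adjoin ℝ (by simp)
    have m1 : X₁ ∈ T := NonUnitalAlgebra.subset_adjoin ℝ (by simp)
    have m2 : X₂ ∈ T := NonUnitalAlgebra.subset_adjoin ℝ (by simp)
    clear_value T
    have h1 : (1 : Matrix (Fin 2 × Fin 2) (Fin 2 × Fin 2) ℝ) ∈ T := by
      -- Cayley–Hamilton: `A₁² + 2 A₁ + 2 = 0`.
      have e : (1 : Matrix (Fin 2 × Fin 2) (Fin 2 × Fin 2) ℝ)
          = (-1/2 : ℝ) • (X₂ * X₂) + (-1 : ℝ) • X₂ := by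
        have hA : (1 : Matrix (Fin 2) (Fin 2) ℝ) = (-1/2 : ℝ) • (A₁ * A₁) + (-1 : ℝ) • A₁ := by
          rw [hA₁]
          ext i j
          fin_cases i <;> fin_cases j <;> simp <;> norm_num
        rw [hX₂, ← Matrix.mul_kronecker_mul, mul_one, ← Matrix.smul_kronecker,
          ← Matrix.smul_kronecker, ← Matrix.add_kronecker, ← hA, Matrix.one_kronecker_one]
      rw [e]
      exact add_mem (SMulMemClass.smul_mem _ (mul_mem m2 m2)) (SMulMemClass.smul_mem _ m2)
    have hJ : !![0, 1; -1, 0] ⊗ₖ (1 : Matrix (Fin 2) (Fin 2) ℝ) ∈ T := by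
      have e : !![0, 1; -1, 0] ⊗ₖ (1 : Matrix (Fin 2) (Fin 2) ℝ) = X₂ + 1 := by
        rw [hX₂, hA₁, ← Matrix.one_kronecker_one, ← Matrix.add_kronecker]
        congr 1
        ext i j
        fin_cases i <;> fin_cases j <;> simp
      rw [e]
      exact add_mem m2 h1
    have hS : (1 : Matrix (Fin 2) (Fin 2) ℝ) ⊗ₖ !![0, 1; 1, 0] ∈ T := by
      have e : (1 : Matrix (Fin 2) (Fin 2) ℝ) ⊗ₖ !![0, 1; 1, 0]
          = (2/3 : ℝ) • X₁ + (-2/3 : ℝ) • X₀ := by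
        have hB : (!![0, 1; 1, 0] : Matrix (Fin 2) (Fin 2) ℝ)
            = (2/3 : ℝ) • B₁ + (-2/3 : ℝ) • B₀ := by
          rw [hB₀, hB₁]
          ext i j
          fin_cases i <;> fin_cases j <;> simp <;> ring
        rw [hB, hX₀, hX₁, Matrix.kronecker_add, Matrix.kronecker_smul, Matrix.kronecker_smul]
        module
      rw [e]
      exact add_mem (SMulMemClass.smul_mem _ m1) (SMulMemClass.smul_mem _ m0)
    have hZ : !![1, 0; 0, -1] ⊗ₖ (1 : Matrix (Fin 2) (Fin 2) ℝ)
        + (-5/2 : ℝ) • ((1 : Matrix (Fin 2) (Fin 2) ℝ) ⊗ₖ !![0, 1; -1, 0]) ∈ T := by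
      have e : !![1, 0; 0, -1] ⊗ₖ (1 : Matrix (Fin 2) (Fin 2) ℝ)
          + (-5/2 : ℝ) • ((1 : Matrix (Fin 2) (Fin 2) ℝ) ⊗ₖ !![0, 1; -1, 0])
          = X₀ + X₁ + (2 * lam + 1) • 1 := by
        have hA : (!![1, 0; 0, -1] : Matrix (Fin 2) (Fin 2) ℝ) = (2 : ℝ) • A₀ + 1 := by
          rw [hA₀]
          ext i j
          fin_cases i <;> fin_cases j <;> simp; norm_num
        have hB : (-5/2 : ℝ) • (!![0, 1; -1, 0] : Matrix (Fin 2) (Fin 2) ℝ)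
            = B₀ + B₁ + (2 * lam) • 1 := by
          rw [hB₀, hB₁]
          ext i j
          fin_cases i <;> fin_cases j <;> simp <;> ring
        rw [← Matrix.kronecker_smul, hA, hB, hX₀, hX₁]
        simp only [Matrix.kronecker_add, Matrix.add_kronecker, Matrix.kronecker_smul,
          Matrix.smul_kronecker, Matrix.one_kronecker_one]
        module
      rw [e]
      exact add_mem (add_mem m0 m1) (SMulMemClass.smul_mem _ h1)
    have hZ' : !![1, 0; 0, -1] ⊗ₖ (1 : Matrix (Fin 2) (Fin 2) ℝ)
        + (5/2 : ℝ) • ((1 : Matrix (Fin 2) (Fin 2) ℝ) ⊗ₖ !![0, 1; -1, 0]) ∈ T := by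
      -- Conjugation by `1 ⊗ S`: `S * S = 1` and `S * J * S = -J`.
      have h := mul_mem (mul_mem hS hZ) hS
      have hSS : (!![0, 1; 1, 0] * !![0, 1; 1, 0] : Matrix (Fin 2) (Fin 2) ℝ) = 1 := by
        ext i j
        fin_cases i <;> fin_cases j <;> simp [Matrix.mul_apply]
      have hSJS : (!![0, 1; 1, 0] * !![0, 1; -1, 0] * !![0, 1; 1, 0] :
          Matrix (Fin 2) (Fin 2) ℝ) = (-1 : ℝ) • !![0, 1; -1, 0] := by
        ext i j
        fin_cases i <;> fin_cases j <;> simp [Matrix.mul_apply]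
      rw [mul_add, add_mul, mul_smul_comm, smul_mul_assoc] at h
      simp only [← Matrix.mul_kronecker_mul, mul_one, one_mul] at h
      rw [hSS, hSJS, Matrix.kronecker_smul, smul_smul] at h
      convert h using 3
      norm_num
    refine eq_top_of_generators_mem h1 hJ ?_ ?_ hS
    · convert add_mem (SMulMemClass.smul_mem (1/2 : ℝ) hZ)
        (SMulMemClass.smul_mem (1/2 : ℝ) hZ') using 1
      module
    · convert add_mem (SMulMemClass.smul_mem (-1/5 : ℝ) hZ)
        (SMulMemClass.smul_mem (1/5 : ℝ) hZ') using 1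
      module
  exact ⟨hX, irreducibleSystem_of_adjoin_eq_top hX (subset_convexHull ℝ _)⟩
end
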